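/- Fix k ∈ {1,…,p−1}. Suppose that almost surely U^{-(k−1)} (U^{-(k−1)})ᵀ B V^{-(k−1)} (V^{-(k−1)})ᵀ = 0_{N×p} (the null hypothesis H_{0,k}). Then the integrated conditional singular value statistic V_{k,0} = (∫_{d_k}^{d_{k−1}} g(y; d₁,…,d_{k−1}) dy) / (∫_{0}^{d_{k−1}} g(y; d₁,…,d_{k−1}) dy) is uniformly distributed on (0,1). -/

import Mathlib

open MeasureTheory ProbabilityTheory Matrix

namespace Icsv

noncomputable def gw {ι : Type*} [Fintype ι] (b : ℝ) (x : ι → ℝ) : ℝ := Real.exp (-b * ∑ i, x i ^ 2)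

lemma gw_pos {ι : Type*} [Fintype ι] (b : ℝ) (x : ι → ℝ) : 0 < gw b x := Real.exp_pos _

lemma gw_cont {ι : Type*} [Fintype ι] (b : ℝ) : Continuous (gw b : (ι → ℝ) → ℝ) := by
  unfold gw; fun_prop

lemma gw_eq_prod {ι : Type*} [Fintype ι] (b : ℝ) (x : ι → ℝ) :
    gw b x = ∏ i, Real.exp (-b * x i ^ 2) := by
  unfold gw
  rw [Finset.mul_sum, Real.exp_sum]

lemma int_pow_gauss (b : ℝ) (hb : 0 < b) (n : ℕ) :
    Integrable (fun x : ℝ => x ^ n * Real.exp (-b * x ^ 2)) := by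
  have := integrable_rpow_mul_exp_neg_mul_sq hb (s := (n : ℝ)) (by
    have : (0 : ℝ) ≤ n := Nat.cast_nonneg n
    linarith)
  simpa [Real.rpow_natCast] using this

lemma int_poly_gauss {ι : Type*} [Fintype ι] (b : ℝ) (hb : 0 < b) (Q : MvPolynomial ι ℝ) :
    Integrable (fun x : ι → ℝ => MvPolynomial.eval x Q * gw b x) := by
  induction Q using MvPolynomial.induction_on' with
  | monomial s a =>
    have h : Integrable (fun x : ι → ℝ => ∏ i, (x i ^ s i * Real.exp (-b * x i ^ 2))) :=
      Integrable.fintype_prod (f := fun i y => y ^ s i * Real.exp (-b * y ^ 2))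
        (fun i => int_pow_gauss b hb (s i))
    refine (h.const_mul a).congr (Filter.Eventually.of_forall fun x => ?_)
    simp only [MvPolynomial.eval_monomial, gw_eq_prod, Finset.prod_mul_distrib]
    rw [Finsupp.prod_fintype _ _ (by simp)]
    ring
  | add p q hp hq =>
    refine (hp.add hq).congr (Filter.Eventually.of_forall fun x => ?_)
    simp [add_mul]

lemma hasDerivAt_transfer {f g : ℝ → ℝ} {a b t : ℝ} (h : HasDerivAt f a t) (hf : ∀ s, g s = f s)
    (hab : b = a) : HasDerivAt g b t := by
  have : g = f := funext hf
  rw [this, hab]; exact h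

lemma eval_lineDeriv {ι : Type*} [Fintype ι] [DecidableEq ι] (Q : MvPolynomial ι ℝ) (i : ι) (x : ι → ℝ) :
    HasLineDerivAt ℝ (fun x : ι → ℝ => MvPolynomial.eval x Q)
      (MvPolynomial.eval x (MvPolynomial.pderiv i Q)) x (Pi.single i 1) := by
  induction Q using MvPolynomial.induction_on with
  | C a =>
    simp only [MvPolynomial.eval_C, MvPolynomial.pderiv_C, map_zero]
    exact hasDerivAt_const _ _
  | add p q hp hq =>
    simp only [map_add]
    exact HasDerivAt.add hp hq
  | mul_X p j hp =>
    simp only [map_mul, Derivation.leibniz, MvPolynomial.eval_X, MvPolynomial.pderiv_X, map_add, smul_eq_mul]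
    have h2 : HasDerivAt (fun t : ℝ => (x + t • (Pi.single i (1:ℝ) : ι → ℝ)) j)
        (MvPolynomial.eval x ((Pi.single i (1 : MvPolynomial ι ℝ) : ι → MvPolynomial ι ℝ) j)) 0 := by
      have h3 : HasDerivAt (fun t : ℝ => x j + t * (Pi.single i (1:ℝ) : ι → ℝ) j)
        (1 * (Pi.single i (1:ℝ) : ι → ℝ) j) 0 := ((hasDerivAt_id (0:ℝ)).mul_const _).const_add _
      refine hasDerivAt_transfer h3 (fun s => by simp) ?_
      by_cases h : j = i
      · subst h; simp
      · simp [h]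
    have := HasDerivAt.mul hp h2
    unfold HasLineDerivAt
    refine hasDerivAt_transfer this (fun s => by simp) ?_
    simp
    ring

lemma gw_lineDeriv {ι : Type*} [Fintype ι] [DecidableEq ι] (b : ℝ) (i : ι) (x : ι → ℝ) :
    HasLineDerivAt ℝ (gw b) (-2 * b * x i * gw b x) x (Pi.single i 1) := by
  have h := eval_lineDeriv (MvPolynomial.C (-b) * ∑ j : ι, MvPolynomial.X j ^ 2 : MvPolynomial ι ℝ) i x
  have h2 : MvPolynomial.eval x (MvPolynomial.pderiv i
      (MvPolynomial.C (-b) * ∑ j : ι, MvPolynomial.X j ^ 2 : MvPolynomial ι ℝ)) = -2 * b * x i := by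
    simp [Derivation.leibniz, Derivation.leibniz_pow, MvPolynomial.pderiv_X, Pi.single_apply]
    ring
  rw [h2] at h
  have := HasDerivAt.exp h
  unfold HasLineDerivAt gw
  refine hasDerivAt_transfer this (fun s => by simp) ?_
  simp; ring

/-- integration by parts against polynomial times Gaussian -/
lemma ibp {ι : Type*} [Fintype ι] [DecidableEq ι] (b : ℝ) (i : ι) (r r' : (ι → ℝ) → ℝ)
    (hr : ∀ x, HasLineDerivAt ℝ r (r' x) x (Pi.single i 1))
    (h1 : ∀ Q : MvPolynomial ι ℝ, Integrable (fun x => r x * (MvPolynomial.eval x Q * gw b x)))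
    (h2 : ∀ Q : MvPolynomial ι ℝ, Integrable (fun x => r' x * (MvPolynomial.eval x Q * gw b x)))
    (Q : MvPolynomial ι ℝ) :
    ∫ x, r x * (MvPolynomial.eval x
        (MvPolynomial.pderiv i Q - MvPolynomial.C (2 * b) * (MvPolynomial.X i * Q)) * gw b x)
      = - ∫ x, r' x * (MvPolynomial.eval x Q * gw b x) := by
  refine integral_bilinear_hasLineDerivAt_right_eq_neg_left_of_integrable
    (B := ContinuousLinearMap.mul ℝ ℝ) (v := Pi.single i 1) (f := r) (f' := r')
    (g := fun x => MvPolynomial.eval x Q * gw b x) (h2 Q) (h1 _) (h1 Q) (fun x _ => hr x) (fun x _ => ?_)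
  have := HasDerivAt.mul (eval_lineDeriv Q i x) (gw_lineDeriv b i x)
  unfold HasLineDerivAt
  refine hasDerivAt_transfer this (fun s => by simp) ?_
  simp
  ring

/-- Gaussian integration by parts -/
lemma ibp_gauss {ι : Type*} [Fintype ι] [DecidableEq ι] (b : ℝ) (hb : 0 < b) (i : ι)
    (Q : MvPolynomial ι ℝ) :
    2 * b * ∫ x, MvPolynomial.eval x (MvPolynomial.X i * Q) * gw b x
      = ∫ x : ι → ℝ, MvPolynomial.eval x (MvPolynomial.pderiv i Q) * gw b x := by
  have h := ibp b i (fun _ => 1) (fun _ => 0) (fun x => hasDerivAt_const _ _)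
    (by simpa using int_poly_gauss b hb) (by simp) Q
  have e : ∀ x : ι → ℝ, 1 * (MvPolynomial.eval x (MvPolynomial.pderiv i Q
      - MvPolynomial.C (2 * b) * (MvPolynomial.X i * Q)) * gw b x)
      = MvPolynomial.eval x (MvPolynomial.pderiv i Q) * gw b x
        - 2 * b * (MvPolynomial.eval x (MvPolynomial.X i * Q) * gw b x) := by
    intro x; simp; ring
  simp only [e] at h
  rw [integral_sub (int_poly_gauss b hb _) ((int_poly_gauss b hb _).const_mul _),
    integral_const_mul] at h
  simp only [zero_mul, integral_zero] at h
  linarith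

end Icsv

namespace Icsv
open MvPolynomial

/-- the derivation `t_l ↦ 2 l t_{m+l}` -/
noncomputable def Dl (m : ℕ) : Derivation ℝ (MvPolynomial ℕ ℝ) (MvPolynomial ℕ ℝ) :=
  mkDerivation ℝ (fun l => C (2 * (l : ℝ)) * X (m + l))

noncomputable def ql (N m : ℕ) : MvPolynomial ℕ ℝ :=
  C ((N : ℝ) + m) * X m + ∑ a ∈ Finset.range m, X (a + 1) * X (m - 1 - a)

lemma chain_rule {A : Type*} [CommRing A] [Algebra ℝ A] (ev : MvPolynomial ℕ ℝ →ₐ[ℝ] A)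
    (D : Derivation ℝ A A) (m : ℕ) (h : ∀ l, D (ev (X l)) = ev (C (2 * (l : ℝ)) * X (m + l)))
    (f : MvPolynomial ℕ ℝ) : D (ev f) = ev (Dl m f) := by
  induction f using MvPolynomial.induction_on with
  | C a =>
    have : ev (C a) = algebraMap ℝ A a := ev.commutes a
    rw [this, D.map_algebraMap]
    simp [Dl]
  | add p q hp hq => simp [hp, hq]
  | mul_X p n hp =>
    rw [map_mul, D.leibniz, Derivation.leibniz, hp, h n]
    simp [Dl, mkDerivation_X]

section
variable {N p : ℕ}

lemma map_deriv_mul {A : Type*} [CommRing A] [Algebra ℝ A] (D : Derivation ℝ A A)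
    {l m n : Type*} [Fintype m] (S : Matrix l m A) (T : Matrix m n A) :
    (S * T).map D = S.map D * T + S * T.map D := by
  ext i j
  simp only [map_apply, Matrix.mul_apply, Matrix.add_apply, map_sum, D.leibniz, smul_eq_mul,
    Finset.sum_add_distrib]
  rw [add_comm]
  congr 1
  exact Finset.sum_congr rfl fun _ _ => by ring

noncomputable def Ym (N p : ℕ) : Matrix (Fin N) (Fin p) (MvPolynomial (Fin N × Fin p) ℝ) :=
  Matrix.of fun i j => X (i, j)

noncomputable def Wm (N p : ℕ) : Matrix (Fin p) (Fin p) (MvPolynomial (Fin N × Fin p) ℝ) :=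
  (Ym N p)ᵀ * Ym N p

lemma Wm_symm : (Wm N p)ᵀ = Wm N p := by simp [Wm, Matrix.transpose_mul]

noncomputable def evM (N p : ℕ) : MvPolynomial ℕ ℝ →ₐ[ℝ] MvPolynomial (Fin N × Fin p) ℝ :=
  aeval (fun m => trace (Wm N p ^ m))

noncomputable def dM (N p m : ℕ) :
    Derivation ℝ (MvPolynomial (Fin N × Fin p) ℝ) (MvPolynomial (Fin N × Fin p) ℝ) :=
  mkDerivation ℝ (fun ij => (Ym N p * Wm N p ^ m) ij.1 ij.2)

lemma dM_eq (m : ℕ) (f : MvPolynomial (Fin N × Fin p) ℝ) :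
    dM N p m f = ∑ ij : Fin N × Fin p, (Ym N p * Wm N p ^ m) ij.1 ij.2 * pderiv ij f := by
  have : dM N p m = ∑ ij : Fin N × Fin p, (Ym N p * Wm N p ^ m) ij.1 ij.2 • pderiv ij := by
    apply MvPolynomial.derivation_ext
    intro ij
    rw [dM, mkDerivation_X, ← Derivation.coeFnAddMonoidHom_apply, map_sum, Finset.sum_apply]
    simp [pderiv_X, Pi.single_apply]
  rw [this, ← Derivation.coeFnAddMonoidHom_apply, map_sum, Finset.sum_apply]
  simp

lemma dM_Wpow (m l : ℕ) : (Wm N p ^ l).map (dM N p m) = (2 * (l : MvPolynomial (Fin N × Fin p) ℝ)) • Wm N p ^ (m + l) := by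
  have hY : (Ym N p).map (dM N p m) = Ym N p * Wm N p ^ m := by
    ext i j
    simp only [map_apply]
    rw [show Ym N p i j = X (i, j) from rfl, dM, mkDerivation_X]
  have hYt : (Ym N p)ᵀ.map (dM N p m) = Wm N p ^ m * (Ym N p)ᵀ := by
    rw [show (Ym N p)ᵀ.map (dM N p m) = ((Ym N p).map (dM N p m))ᵀ from rfl, hY, Matrix.transpose_mul, Matrix.transpose_pow, Wm_symm]
  have hW : (Wm N p).map (dM N p m) = (2 : MvPolynomial (Fin N × Fin p) ℝ) • Wm N p ^ (m + 1) := by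
    conv_lhs => rw [Wm]
    rw [map_deriv_mul, hY, hYt, Matrix.mul_assoc, ← Matrix.mul_assoc (Ym N p)ᵀ,
      show (Ym N p)ᵀ * Ym N p = Wm N p from rfl, ← pow_succ, ← pow_succ', two_smul]
  induction l with
  | zero =>
    ext i j
    by_cases h : i = j <;> simp [h]
  | succ l ih =>
    rw [pow_succ, map_deriv_mul, ih, hW, Matrix.smul_mul, ← pow_succ, Matrix.mul_smul, ← pow_add,
      show l + (m + 1) = m + (l + 1) by ring, show m + l + 1 = m + (l + 1) by ring, ← add_smul]
    congr 1
    push_cast; ring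

lemma dM_evM (m : ℕ) (f : MvPolynomial ℕ ℝ) : dM N p m (evM N p f) = evM N p (Dl m f) := by
  apply chain_rule
  intro l
  have h := congrArg trace (dM_Wpow (N := N) (p := p) m l)
  have h2 : trace ((Wm N p ^ l).map (dM N p m)) = dM N p m (trace (Wm N p ^ l)) := by
    simp [trace]
  rw [h2, trace_smul] at h
  simp only [evM, aeval_X, map_mul] at h ⊢
  rw [h]
  have h2 : (C 2 : MvPolynomial (Fin N × Fin p) ℝ) = 2 := map_ofNat C 2
  simp [h2]

/-- `Z_{jl} = ∑_i ∂_{ij} (Y W^n)_{il}` -/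
noncomputable def Zm (N p n : ℕ) : Matrix (Fin p) (Fin p) (MvPolynomial (Fin N × Fin p) ℝ) :=
  Matrix.of fun j l => ∑ i, pderiv (i, j) ((Ym N p * Wm N p ^ n) i l)

lemma pderiv_W (i : Fin N) (j q l : Fin p) : pderiv (i, j) (Wm N p q l) =
    (if q = j then Ym N p i l else 0) + (if l = j then Ym N p i q else 0) := by
  simp only [Wm, Matrix.mul_apply, Matrix.transpose_apply, map_sum, Derivation.leibniz, smul_eq_mul,
    Finset.sum_add_distrib]
  simp only [Ym, Matrix.of_apply, pderiv_X, Pi.single_apply, Prod.mk.injEq, mul_ite, mul_one, mul_zero]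
  rw [add_comm]
  congr 1
  · by_cases h : q = j <;> simp [h]
  · by_cases h : l = j <;> simp [h]

lemma Zm_succ (n : ℕ) : Zm N p (n + 1) = Zm N p n * Wm N p + Wm N p ^ (n + 1)
    + trace (Wm N p ^ (n + 1)) • (1 : Matrix (Fin p) (Fin p) (MvPolynomial (Fin N × Fin p) ℝ)) := by
  have hW : Wm N p ^ (n + 1) = (Ym N p * Wm N p ^ n)ᵀ * Ym N p := by
    rw [Matrix.transpose_mul, Matrix.transpose_pow, Wm_symm, Matrix.mul_assoc, pow_succ]; rfl
  have e : Ym N p * Wm N p ^ (n + 1) = (Ym N p * Wm N p ^ n) * Wm N p := by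
    rw [pow_succ, Matrix.mul_assoc]
  rw [hW]
  ext1 j l
  simp only [Zm, e, Matrix.of_apply, Matrix.add_apply, Matrix.smul_apply]
  generalize Ym N p * Wm N p ^ n = T
  simp only [Matrix.mul_apply (M := T) (N := Wm N p), map_sum, Derivation.leibniz, smul_eq_mul,
    Finset.sum_add_distrib, pderiv_W, mul_add, mul_ite, mul_zero, Finset.sum_ite_eq', Finset.mem_univ, if_true]
  simp only [Matrix.mul_apply, Matrix.of_apply, trace, diag, transpose_apply, Matrix.one_apply, Finset.sum_mul]
  have h1 : (∑ i, ∑ q, if l = j then T i q * Ym N p i q else 0) =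
      (∑ q, ∑ i, T i q * Ym N p i q) * (if j = l then 1 else 0) := by
    rw [Finset.sum_comm]
    by_cases h : l = j
    · simp [h]
    · simp [h, Ne.symm h]
  rw [h1, Finset.sum_comm (s := Finset.univ) (t := Finset.univ) (f := fun i q => Wm N p q l * _)]
  simp only [mul_comm (Wm N p _ _)]
  simp only [Finset.sum_mul]
  rw [add_comm, add_assoc]

lemma Zm_eq (n : ℕ) : Zm N p n = ((N : MvPolynomial (Fin N × Fin p) ℝ) + n) • Wm N p ^ n
    + ∑ a ∈ Finset.range n, trace (Wm N p ^ (a + 1)) • Wm N p ^ (n - 1 - a) := by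
  induction n with
  | zero =>
    ext1 j l
    by_cases h : j = l
    · subst h; simp [Zm, Ym, pderiv_X]
    · simp [Zm, Ym, pderiv_X, h, Pi.single_apply, Ne.symm h]
  | succ n ih =>
    rw [Zm_succ, ih, Finset.sum_range_succ, add_mul, Finset.sum_mul]
    have : ∑ a ∈ Finset.range n, (trace (Wm N p ^ (a + 1)) • Wm N p ^ (n - 1 - a)) * Wm N p
        = ∑ a ∈ Finset.range n, trace (Wm N p ^ (a + 1)) • Wm N p ^ (n + 1 - 1 - a) := by
      refine Finset.sum_congr rfl fun a ha => ?_
      rw [Finset.mem_range] at ha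
      rw [Matrix.smul_mul, ← pow_succ, show n - 1 - a + 1 = n + 1 - 1 - a by omega]
    rw [this, Matrix.smul_mul, ← pow_succ]
    have h3 : n + 1 - 1 - n = 0 := by omega
    rw [h3, pow_zero]
    push_cast
    rw [← add_assoc (N : MvPolynomial (Fin N × Fin p) ℝ), add_smul _ (1 : MvPolynomial (Fin N × Fin p) ℝ), one_smul]
    abel

lemma div_eq (n : ℕ) : ∑ ij : Fin N × Fin p, pderiv ij ((Ym N p * Wm N p ^ n) ij.1 ij.2)
    = evM N p (ql N n) := by
  have h := congrArg trace (Zm_eq (N := N) (p := p) n)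
  rw [Fintype.sum_prod_type, Finset.sum_comm]
  refine Eq.trans ?_ (h.trans ?_)
  · simp [Zm, trace]
  · simp [ql, evM, trace_add, trace_smul, trace_sum]

/-- Loop equations for a functional satisfying Gaussian integration by parts. -/
lemma loop_matrix (c : ℝ) (L : MvPolynomial (Fin N × Fin p) ℝ →ₗ[ℝ] ℝ)
    (hL : ∀ i Q, c * L (X i * Q) = L (pderiv i Q)) (m : ℕ) (f : MvPolynomial ℕ ℝ) :
    c * L (evM N p (X (m + 1) * f)) = L (evM N p (ql N m * f + Dl m f)) := by
  have h1 : evM N p (X (m + 1) * f) =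
      ∑ ij : Fin N × Fin p, X ij * ((Ym N p * Wm N p ^ m) ij.1 ij.2 * evM N p f) := by
    have : Wm N p ^ (m + 1) = (Ym N p)ᵀ * (Ym N p * Wm N p ^ m) := by
      rw [← Matrix.mul_assoc, pow_succ']; rfl
    rw [map_mul, evM, aeval_X, this, Fintype.sum_prod_type, Finset.sum_comm]
    simp only [trace, diag, Matrix.mul_apply (M := (Ym N p)ᵀ), Finset.sum_mul, transpose_apply]
    refine Finset.sum_congr rfl fun j _ => Finset.sum_congr rfl fun i _ => ?_
    rw [mul_assoc]; rfl
  rw [h1, map_sum, Finset.mul_sum]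
  simp only [hL]
  rw [← map_sum]
  congr 1
  simp only [Derivation.leibniz, smul_eq_mul, Finset.sum_add_distrib]
  rw [map_add, map_mul, ← div_eq, ← dM_evM, dM_eq, ← Finset.mul_sum]
  ring

lemma evM_zero : evM N p (X 0) = C (p : ℝ) := by
  simp [evM]

end
end Icsv

namespace Icsv
open MvPolynomial

lemma list_mul_X (n m : ℕ) (S : Set (MvPolynomial ℕ ℝ))
    (hS : S = {g | ∃ l : List ℕ, l.sum = n ∧ g = (l.map X).prod})
    (f : MvPolynomial ℕ ℝ) (hf : f ∈ Submodule.span ℝ S) :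
    X m * f ∈ Submodule.span ℝ {g : MvPolynomial ℕ ℝ | ∃ l : List ℕ, l.sum = m + n ∧ g = (l.map X).prod} := by
  subst hS
  induction hf using Submodule.span_induction with
  | mem x hx =>
    obtain ⟨l, hl, rfl⟩ := hx
    exact Submodule.subset_span ⟨m :: l, by simp [hl], by simp⟩
  | zero => simp
  | add x y _ _ hx hy => rw [mul_add]; exact Submodule.add_mem _ hx hy
  | smul a x _ hx => rw [mul_smul_comm]; exact Submodule.smul_mem _ _ hx

noncomputable def An (n : ℕ) : Submodule ℝ (MvPolynomial ℕ ℝ) :=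
  Submodule.span ℝ {g | ∃ l : List ℕ, l.sum = n ∧ g = (l.map X).prod}

lemma An_mul_X {n m : ℕ} {f : MvPolynomial ℕ ℝ} (hf : f ∈ An n) : X m * f ∈ An (m + n) :=
  list_mul_X n m _ rfl f hf

lemma An_prod (l : List ℕ) : ((l.map X).prod : MvPolynomial ℕ ℝ) ∈ An l.sum :=
  Submodule.subset_span ⟨l, rfl, rfl⟩

lemma Dl_list (m : ℕ) (l : List ℕ) : Dl m ((l.map X).prod : MvPolynomial ℕ ℝ) ∈ An (m + l.sum) := by
  induction l with
  | nil => simp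
  | cons a l ih =>
    rw [List.map_cons, List.prod_cons, Derivation.leibniz, List.sum_cons]
    refine Submodule.add_mem _ ?_ ?_
    · have := An_mul_X (m := a) ih
      rwa [show a + (m + l.sum) = m + (a + l.sum) by ring] at this
    · have := An_mul_X (m := m + a) (An_prod l)
      rw [show m + a + l.sum = m + (a + l.sum) by ring] at this
      have h2 := Submodule.smul_mem _ (2 * (a : ℝ)) this
      convert h2 using 1
      simp only [Dl, mkDerivation_X, smul_eq_mul, MvPolynomial.smul_eq_C_mul]
      ring

lemma mem_iSup_list (f : MvPolynomial ℕ ℝ) :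
    f ∈ Submodule.span ℝ {g : MvPolynomial ℕ ℝ | ∃ l : List ℕ, g = (l.map X).prod} := by
  induction f using MvPolynomial.induction_on with
  | C a =>
    have : (C a : MvPolynomial ℕ ℝ) = a • (([] : List ℕ).map X).prod := by
      simp [MvPolynomial.smul_eq_C_mul]
    rw [this]
    exact Submodule.smul_mem _ _ (Submodule.subset_span ⟨_, rfl⟩)
  | add p q hp hq => exact Submodule.add_mem _ hp hq
  | mul_X p n hp =>
    induction hp using Submodule.span_induction with
    | mem x hx =>
      obtain ⟨l, rfl⟩ := hx
      exact Submodule.subset_span ⟨n :: l, by simp [mul_comm]⟩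
    | zero => simp
    | add x y _ _ hx hy => rw [add_mul]; exact Submodule.add_mem _ hx hy
    | smul a x _ hx => rw [smul_mul_assoc]; exact Submodule.smul_mem _ _ hx

lemma loop_zero (N p : ℕ) (c : ℝ) (hc : c ≠ 0) (F : MvPolynomial ℕ ℝ →ₗ[ℝ] ℝ)
    (h0 : ∀ f, F (X 0 * f) = p * F f)
    (hl : ∀ m f, c * F (X (m + 1) * f) = F (ql N m * f + Dl m f))
    (h1 : F 1 = 0) (f : MvPolynomial ℕ ℝ) : F f = 0 := by
  have key : ∀ n, ∀ g ∈ An n, F g = 0 := by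
    intro n
    induction n using Nat.strong_induction_on with
    | _ n ih =>
      intro g hg
      have hlist : ∀ l : List ℕ, l.sum = n → F (l.map X).prod = 0 := by
        intro l
        induction l with
        | nil => intro _; simpa using h1
        | cons a l ihl =>
          intro hs
          rw [List.sum_cons] at hs
          rw [List.map_cons, List.prod_cons]
          cases a with
          | zero => rw [h0, ihl (by omega), mul_zero]
          | succ m =>
            have h2 := hl m (l.map X).prod
            have h3 : ql N m * (l.map X).prod ∈ An (m + l.sum) := by
              rw [ql, add_mul, mul_assoc, ← MvPolynomial.smul_eq_C_mul, Finset.sum_mul]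
              refine Submodule.add_mem _ (Submodule.smul_mem _ _ (An_mul_X (An_prod l)))
                (Submodule.sum_mem _ fun a ha => ?_)
              rw [Finset.mem_range] at ha
              rw [mul_assoc]
              have := An_mul_X (m := a + 1) (An_mul_X (m := m - 1 - a) (An_prod l))
              rwa [show a + 1 + (m - 1 - a + l.sum) = m + l.sum by omega] at this
            rw [ih (m + l.sum) (by omega) _ (Submodule.add_mem _ h3 (Dl_list m l))] at h2
            exact (mul_eq_zero.mp h2).resolve_left hc
      induction hg using Submodule.span_induction with
      | mem x hx => obtain ⟨l, h, rfl⟩ := hx; exact hlist l h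
      | zero => simp
      | add x y _ _ hx hy => rw [map_add, hx, hy, add_zero]
      | smul a x _ hx => rw [map_smul, hx, smul_zero]
  have := mem_iSup_list f
  induction this using Submodule.span_induction with
  | mem x hx => obtain ⟨l, rfl⟩ := hx; exact key _ _ (An_prod l)
  | zero => simp
  | add x y _ _ hx hy => rw [map_add, hx, hy, add_zero]
  | smul a x _ hx => rw [map_smul, hx, smul_zero]

/-! ### singular value side -/

noncomputable def evD (p : ℕ) : MvPolynomial ℕ ℝ →ₐ[ℝ] MvPolynomial (Fin p) ℝ :=
  aeval (fun m => ∑ i, X i ^ (2 * m))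

noncomputable def dD (p m : ℕ) : Derivation ℝ (MvPolynomial (Fin p) ℝ) (MvPolynomial (Fin p) ℝ) :=
  mkDerivation ℝ (fun i => X i ^ (2 * m + 1))

lemma dD_eq (p m : ℕ) (f : MvPolynomial (Fin p) ℝ) :
    dD p m f = ∑ i : Fin p, X i ^ (2 * m + 1) * pderiv i f := by
  have : dD p m = ∑ i : Fin p, (X i ^ (2 * m + 1) : MvPolynomial (Fin p) ℝ) • pderiv i := by
    apply MvPolynomial.derivation_ext
    intro i
    rw [dD, mkDerivation_X, ← Derivation.coeFnAddMonoidHom_apply, map_sum, Finset.sum_apply]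
    simp [pderiv_X, Pi.single_apply]
  rw [this, ← Derivation.coeFnAddMonoidHom_apply, map_sum, Finset.sum_apply]
  simp

lemma dD_pow (p m l : ℕ) (i : Fin p) : dD p m (X i ^ l) = C (l : ℝ) * X i ^ (2 * m + l) := by
  rw [Derivation.leibniz_pow, dD, mkDerivation_X]
  cases l with
  | zero => simp
  | succ l =>
    simp only [Nat.add_sub_cancel, smul_eq_mul, nsmul_eq_mul]
    rw [← mul_assoc, mul_assoc, ← pow_add, show l + (2 * m + 1) = 2 * m + (l + 1) by ring]
    simp

lemma dD_evD (p m : ℕ) (f : MvPolynomial ℕ ℝ) : dD p m (evD p f) = evD p (Dl m f) := by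
  apply chain_rule
  intro l
  simp only [evD, aeval_X, map_sum, dD_pow, map_mul, Finset.mul_sum]
  refine Finset.sum_congr rfl fun i _ => ?_
  rw [show 2 * m + 2 * l = 2 * (m + l) by ring]
  simp

noncomputable def Jp (M p : ℕ) : MvPolynomial (Fin p) ℝ :=
  (∏ i, X i ^ M) * ∏ i, ∏ j ∈ Finset.Ioi i, (X i ^ 2 - X j ^ 2)

lemma logderiv_prod {A : Type*} [CommRing A] [Algebra ℝ A] (D : Derivation ℝ A A) {ι : Type*}
    (s : Finset ι) (f q : ι → A) (h : ∀ i ∈ s, D (f i) = f i * q i) :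
    D (∏ i ∈ s, f i) = (∏ i ∈ s, f i) * ∑ i ∈ s, q i := by
  classical
  induction s using Finset.induction_on with
  | empty => simp
  | insert a s ha ih =>
    rw [Finset.prod_insert ha, Finset.sum_insert ha, D.leibniz,
      ih (fun i hi => h i (Finset.mem_insert_of_mem hi)), h a (Finset.mem_insert_self _ _)]
    simp only [smul_eq_mul]; ring

lemma dD_J (M p m : ℕ) : (∑ i : Fin p, pderiv i (X i ^ (2 * m + 1) : MvPolynomial (Fin p) ℝ)) * Jp M p
    + dD p m (Jp M p) = Jp M p * evD p (ql (M + p) m) := by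
  set S : Fin p → Fin p → MvPolynomial (Fin p) ℝ := fun i j =>
    ∑ a ∈ Finset.range (m + 1), (X i ^ 2) ^ a * (X j ^ 2) ^ (m - a) with hS
  have hSsymm : ∀ i j, S i j = S j i := by
    intro i j
    simp only [hS]
    rw [← Finset.sum_range_reflect]
    refine Finset.sum_congr rfl fun a ha => ?_
    rw [Finset.mem_range] at ha
    rw [show m + 1 - 1 - a = m - a by omega, show m - (m - a) = a by omega, mul_comm]
  have e1 : dD p m (∏ i, X i ^ M) = (∏ i, X i ^ M) * ∑ i : Fin p, C (M : ℝ) * X i ^ (2 * m) := by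
    apply logderiv_prod
    intro i _
    rw [dD_pow, pow_add]; ring
  have e2 : dD p m (∏ i : Fin p, ∏ j ∈ Finset.Ioi i, (X i ^ 2 - X j ^ 2 : MvPolynomial (Fin p) ℝ))
      = (∏ i : Fin p, ∏ j ∈ Finset.Ioi i, (X i ^ 2 - X j ^ 2 : MvPolynomial (Fin p) ℝ)) *
        ∑ i : Fin p, ∑ j ∈ Finset.Ioi i, (S j i + S i j) := by
    apply logderiv_prod
    intro i _
    apply logderiv_prod
    intro j _
    rw [map_sub, dD_pow, dD_pow, hSsymm j i]
    have := geom_sum₂_mul (X i ^ 2 : MvPolynomial (Fin p) ℝ) (X j ^ 2) (m + 1)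
    simp only [Nat.add_sub_cancel] at this
    have h2 : (C ((2 : ℕ) : ℝ) : MvPolynomial (Fin p) ℝ) = 2 := by simpa using map_ofNat C 2
    rw [h2, show 2 * m + 2 = 2 * (m + 1) by ring, pow_mul, pow_mul]
    linear_combination (-2) * this
  have e3 : ∑ i : Fin p, ∑ j ∈ Finset.Ioi i, (S j i + S i j) + ∑ i, S i i = ∑ i, ∑ j, S i j := by
    rw [Finset.sum_sum_Ioi_add_eq_sum_sum_off_diag, ← Finset.sum_add_distrib]
    refine Finset.sum_congr rfl fun i _ => ?_
    rw [add_comm, ← Fintype.sum_eq_add_sum_compl i (fun j => S j i)]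
    exact Finset.sum_congr rfl fun j _ => hSsymm j i
  have e4 : ∀ i, S i i = C ((m : ℝ) + 1) * X i ^ (2 * m) := by
    intro i
    simp only [hS]
    rw [Finset.sum_congr rfl (g := fun _ => X i ^ (2 * m))]
    · simp
    · intro a ha
      rw [Finset.mem_range] at ha
      rw [← pow_add, show a + (m - a) = m by omega, pow_mul]
  have e5 : ∑ i, ∑ j, S i j = ∑ a ∈ Finset.range (m + 1), evD p (X a * X (m - a)) := by
    simp only [hS, evD, map_mul, aeval_X, pow_mul]
    have : ∀ i : Fin p, ∑ j : Fin p, ∑ a ∈ Finset.range (m + 1), (X i ^ 2 : MvPolynomial (Fin p) ℝ) ^ a * (X j ^ 2) ^ (m - a)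
      = ∑ a ∈ Finset.range (m + 1), ∑ j : Fin p, (X i ^ 2 : MvPolynomial (Fin p) ℝ) ^ a * (X j ^ 2) ^ (m - a) :=
      fun i => Finset.sum_comm
    simp only [this]
    rw [Finset.sum_comm]
    exact Finset.sum_congr rfl fun a _ => by rw [Finset.sum_mul_sum]
  have e6 : ∑ a ∈ Finset.range (m + 1), evD p (X a * X (m - a)) = C (p : ℝ) * evD p (X m)
      + ∑ a ∈ Finset.range m, evD p (X (a + 1) * X (m - 1 - a)) := by
    rw [Finset.sum_range_succ', add_comm]
    congr 1
    · simp [evD]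
    · refine Finset.sum_congr rfl fun a ha => ?_
      rw [show m - (a + 1) = m - 1 - a by omega]
  have e7 : ∑ i : Fin p, pderiv i (X i ^ (2 * m + 1) : MvPolynomial (Fin p) ℝ) =
      C (2 * (m : ℝ) + 1) * evD p (X m) := by
    simp only [evD, aeval_X, Finset.mul_sum]
    refine Finset.sum_congr rfl fun i _ => ?_
    rw [Derivation.leibniz_pow]
    have h2 : (C 2 : MvPolynomial (Fin p) ℝ) = 2 := map_ofNat C 2
    simp [pderiv_X, h2]
  have e8 : evD p (X m) = ∑ i, X i ^ (2 * m) := by simp [evD]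
  simp only [e4, ← Finset.mul_sum, ← e8] at e3 e1
  have e9 : evD p (ql (M + p) m) = C ((M : ℝ) + p + m) * evD p (X m)
      + ∑ a ∈ Finset.range m, evD p (X (a + 1) * X (m - 1 - a)) := by
    rw [ql, map_add, map_sum, map_mul]
    simp [evD]
  rw [e5, e6] at e3
  rw [Jp, Derivation.leibniz, e1, e2, e7, e9]
  simp only [smul_eq_mul, map_add, map_mul, map_one] at e3 ⊢
  rw [← eq_sub_iff_add_eq] at e3
  rw [e3]
  have h2 : (C 2 : MvPolynomial (Fin p) ℝ) = 2 := map_ofNat C 2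
  rw [h2]
  ring

lemma evD_zero (p : ℕ) : evD p (X 0) = C (p : ℝ) := by
  simp [evD]

end Icsv

namespace Icsv
open MvPolynomial Filter Topology

def Cone (p : ℕ) : Set (Fin p → ℝ) := {x | Antitone x ∧ ∀ i, 0 ≤ x i}

lemma cone_closed (p : ℕ) : IsClosed (Cone p) := by
  have : Cone p = (⋂ i, ⋂ j, ⋂ (_ : i ≤ j), {x | x j ≤ x i}) ∩ ⋂ i, {x | 0 ≤ x i} := by
    ext x
    simp [Cone, Antitone]
  rw [this]
  refine IsClosed.inter ?_ ?_
  · exact isClosed_iInter fun i => isClosed_iInter fun j => isClosed_iInter fun _ =>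
      isClosed_le (continuous_apply j) (continuous_apply i)
  · exact isClosed_iInter fun i => isClosed_le continuous_const (continuous_apply i)

lemma eval_Jp (M p : ℕ) (x : Fin p → ℝ) : eval x (Jp M p) =
    (∏ i, x i ^ M) * ∏ i, ∏ j ∈ Finset.Ioi i, (x i ^ 2 - x j ^ 2) := by
  simp [Jp, map_prod]

lemma Jp_nonneg (M p : ℕ) {x : Fin p → ℝ} (hx : x ∈ Cone p) : 0 ≤ eval x (Jp M p) := by
  rw [eval_Jp]
  refine mul_nonneg (Finset.prod_nonneg fun i _ => pow_nonneg (hx.2 i) _)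
    (Finset.prod_nonneg fun i _ => Finset.prod_nonneg fun j hj => ?_)
  have h1 := hx.1 (Finset.mem_Ioi.mp hj).le
  have h2 := hx.2 j
  nlinarith

lemma cone_nhds (M p : ℕ) (hM : 1 ≤ M) {x : Fin p → ℝ} (hx : x ∈ Cone p) (hJ : eval x (Jp M p) ≠ 0) :
    Cone p ∈ 𝓝 x := by
  rw [eval_Jp] at hJ
  have h1 := (mul_ne_zero_iff.mp hJ).1
  have h2 := (mul_ne_zero_iff.mp hJ).2
  rw [Finset.prod_ne_zero_iff] at h1 h2
  have hpos : ∀ i, 0 < x i := by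
    intro i
    refine lt_of_le_of_ne (hx.2 i) fun h => h1 i (Finset.mem_univ _) ?_
    rw [← h, zero_pow (by omega)]
  have hlt : ∀ i j, i < j → x j < x i := by
    intro i j hij
    refine lt_of_le_of_ne (hx.1 hij.le) fun h => ?_
    refine (Finset.prod_ne_zero_iff.mp (h2 i (Finset.mem_univ _))) j (Finset.mem_Ioi.mpr hij) ?_
    rw [h]; ring
  have e1 : ∀ᶠ y in 𝓝 x, ∀ i, 0 < y i := by
    rw [eventually_all]
    exact fun i => (continuous_apply i).continuousAt.eventually (lt_mem_nhds (hpos i))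
  have e2 : ∀ᶠ y in 𝓝 x, ∀ i j, i < j → y j < y i := by
    rw [eventually_all]; intro i
    rw [eventually_all]; intro j
    by_cases hij : i < j
    · have : ∀ᶠ y : Fin p → ℝ in 𝓝 x, y j < y i :=
        (isOpen_lt (continuous_apply j) (continuous_apply i)).mem_nhds (hlt i j hij)
      exact this.mono fun y hy _ => hy
    · exact Eventually.of_forall fun y h => absurd h hij
  filter_upwards [e1, e2] with y hy1 hy2
  refine ⟨fun i j hij => ?_, fun i => (hy1 i).le⟩
  rcases hij.eq_or_lt with h | h
  · rw [h]
  · exact (hy2 i j h).le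

lemma eval_cont {ι : Type*} (Q : MvPolynomial ι ℝ) : Continuous fun x : ι → ℝ => eval x Q :=
  MvPolynomial.continuous_eval Q

noncomputable def rC (M p : ℕ) (δ : ℝ) (x : Fin p → ℝ) : ℝ :=
  Set.indicator (Cone p) (fun x => eval x (Jp M p) ^ (1 + δ)) x

noncomputable def rC' (M p : ℕ) (δ : ℝ) (i : Fin p) (x : Fin p → ℝ) : ℝ :=
  Set.indicator (Cone p) (fun x => (1 + δ) * eval x (Jp M p) ^ δ * eval x (pderiv i (Jp M p))) x

lemma rC_deriv (M p : ℕ) (hM : 1 ≤ M) (δ : ℝ) (hδ : 0 < δ) (i : Fin p) (x : Fin p → ℝ) :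
    HasLineDerivAt ℝ (rC M p δ) (rC' M p δ i x) x (Pi.single i 1) := by
  have hh := eval_lineDeriv (Jp M p) i x
  unfold HasLineDerivAt at hh ⊢
  have hc : ContinuousAt (fun t : ℝ => x + t • (Pi.single i (1:ℝ) : Fin p → ℝ)) 0 := by fun_prop
  have hc' : Tendsto (fun t : ℝ => x + t • (Pi.single i (1:ℝ) : Fin p → ℝ)) (𝓝 0) (𝓝 x) := by
    have := hc.tendsto
    simpa using this
  by_cases hJ : eval x (Jp M p) = 0
  · have e0 : rC' M p δ i x = 0 := by
      simp [rC', hJ, Set.indicator_apply, Real.zero_rpow hδ.ne']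
    rw [e0, hasDerivAt_iff_isLittleO]
    have e1 : rC M p δ (x + (0:ℝ) • Pi.single i 1) = 0 := by
      simp [rC, hJ, Set.indicator_apply, Real.zero_rpow (by linarith : 1 + δ ≠ 0)]
    simp only [e1, sub_zero, smul_zero]
    rw [hasDerivAt_iff_isLittleO] at hh
    have hO : (fun t : ℝ => eval (x + t • (Pi.single i (1:ℝ) : Fin p → ℝ)) (Jp M p)) =O[𝓝 0] fun t : ℝ => t := by
      have h1 := hh.isBigO
      simp only [zero_smul, add_zero, hJ, sub_zero, smul_eq_mul] at h1
      have h2 : (fun t : ℝ => t * eval x (pderiv i (Jp M p))) =O[𝓝 0] fun t : ℝ => t := by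
        simpa [mul_comm] using (Asymptotics.isBigO_refl (fun t : ℝ => t) (𝓝 0)).const_mul_left (eval x (pderiv i (Jp M p)))
      simpa using h1.add h2
    have hT : Tendsto (fun t : ℝ => |eval (x + t • (Pi.single i (1:ℝ) : Fin p → ℝ)) (Jp M p)| ^ δ) (𝓝 0) (𝓝 0) := by
      have h1 : Tendsto (fun y : Fin p → ℝ => |eval y (Jp M p)| ^ δ) (𝓝 x) (𝓝 (|eval x (Jp M p)| ^ δ)) :=
        ((Real.continuous_rpow_const hδ.le).comp (eval_cont (Jp M p)).abs).continuousAt.tendsto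
      rw [hJ, abs_zero, Real.zero_rpow hδ.ne'] at h1
      exact h1.comp hc'
    have ho : (fun t : ℝ => |eval (x + t • (Pi.single i (1:ℝ) : Fin p → ℝ)) (Jp M p)| ^ δ) =o[𝓝 0] fun _ : ℝ => (1:ℝ) :=
      (Asymptotics.isLittleO_one_iff ℝ).mpr hT
    have h3 := hO.mul_isLittleO ho
    simp only [mul_one] at h3
    refine Asymptotics.IsBigO.trans_isLittleO ?_ h3
    refine Asymptotics.isBigO_of_le _ fun t => ?_
    set y := x + t • (Pi.single i (1:ℝ) : Fin p → ℝ)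
    by_cases hy : y ∈ Cone p
    · have hn := Jp_nonneg M p hy
      rw [rC, Set.indicator_of_mem hy, abs_of_nonneg hn, Real.norm_eq_abs, Real.norm_eq_abs]
      rcases hn.eq_or_lt with h | h
      · rw [← h, Real.zero_rpow (by linarith : 1 + δ ≠ 0)]; simp
      · rw [Real.rpow_add h, Real.rpow_one]
    · rw [rC, Set.indicator_of_notMem hy, norm_zero]; positivity
  · by_cases hx : x ∈ Cone p
    · have hn : 0 < eval x (Jp M p) := lt_of_le_of_ne (Jp_nonneg M p hx) (Ne.symm hJ)
      have h1 := HasDerivAt.rpow_const (p := 1 + δ) hh (Or.inl (by simpa using hJ))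
      have h2 : (fun t : ℝ => rC M p δ (x + t • Pi.single i 1)) =ᶠ[𝓝 0]
          fun t => eval (x + t • (Pi.single i (1:ℝ) : Fin p → ℝ)) (Jp M p) ^ (1 + δ) := by
        filter_upwards [hc'.eventually (cone_nhds M p hM hx hJ)] with t ht
        have ht' : x + t • (Pi.single i (1:ℝ) : Fin p → ℝ) ∈ Cone p := ht
        rw [rC, Set.indicator_of_mem ht']
      refine HasDerivAt.congr_of_eventuallyEq ?_ h2
      refine hasDerivAt_transfer h1 (fun s => rfl) ?_
      rw [rC', Set.indicator_of_mem hx]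
      simp; ring
    · have h2 : (fun t : ℝ => rC M p δ (x + t • Pi.single i 1)) =ᶠ[𝓝 0] fun t => 0 := by
        filter_upwards [hc'.eventually ((cone_closed p).isOpen_compl.mem_nhds hx)] with t ht
        rw [rC, Set.indicator_of_notMem ht]
      refine HasDerivAt.congr_of_eventuallyEq ?_ h2
      rw [rC', Set.indicator_of_notMem hx]
      exact hasDerivAt_const _ _

lemma rpow_bound {a s : ℝ} (ha : 0 ≤ a) (hs : 0 ≤ s) (hs2 : s ≤ 2) : a ^ s ≤ 1 + a ^ 2 := by
  rcases le_total a 1 with h | h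
  · have := Real.rpow_le_one ha h hs
    nlinarith [sq_nonneg a]
  · have := Real.rpow_le_rpow_of_exponent_le h hs2
    rw [Real.rpow_two] at this
    linarith

lemma rC_meas (M p : ℕ) (δ : ℝ) : Measurable (rC M p δ) :=
  ((eval_cont _).measurable.pow_const _).indicator (cone_closed p).measurableSet

lemma rC'_meas (M p : ℕ) (δ : ℝ) (i : Fin p) : Measurable (rC' M p δ i) :=
  ((((eval_cont _).measurable.pow_const _).const_mul _).mul (eval_cont _).measurable).indicator
    (cone_closed p).measurableSet

lemma rC_bound (M p : ℕ) {δ : ℝ} (h0 : 0 ≤ δ) (h1 : δ ≤ 1) (x : Fin p → ℝ) :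
    |rC M p δ x| ≤ 1 + eval x (Jp M p) ^ 2 := by
  by_cases hx : x ∈ Cone p
  · have hn := Jp_nonneg M p hx
    rw [rC, Set.indicator_of_mem hx, abs_of_nonneg (Real.rpow_nonneg hn _)]
    exact rpow_bound hn (by linarith) (by linarith)
  · rw [rC, Set.indicator_of_notMem hx, abs_zero]; positivity

lemma rC'_bound (M p : ℕ) {δ : ℝ} (h0 : 0 ≤ δ) (h1 : δ ≤ 1) (i : Fin p) (x : Fin p → ℝ) :
    |rC' M p δ i x| ≤ 2 * (1 + eval x (Jp M p) ^ 2) * |eval x (pderiv i (Jp M p))| := by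
  by_cases hx : x ∈ Cone p
  · have hn := Jp_nonneg M p hx
    rw [rC', Set.indicator_of_mem hx, abs_mul, abs_mul, abs_of_nonneg (Real.rpow_nonneg hn _),
      abs_of_nonneg (by linarith : 0 ≤ 1 + δ)]
    refine mul_le_mul_of_nonneg_right ?_ (abs_nonneg _)
    exact mul_le_mul (by linarith) (rpow_bound hn (by linarith) (by linarith))
      (Real.rpow_nonneg hn _) (by norm_num)
  · rw [rC', Set.indicator_of_notMem hx, abs_zero]; positivity

lemma rC_int (M p : ℕ) {δ : ℝ} (h0 : 0 ≤ δ) (h1 : δ ≤ 1) (b : ℝ) (hb : 0 < b)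
    (Q : MvPolynomial (Fin p) ℝ) : Integrable (fun x => rC M p δ x * (eval x Q * gw b x)) := by
  refine (int_poly_gauss b hb ((1 + Jp M p ^ 2) * Q)).norm.mono'
    ((rC_meas M p δ).mul ((eval_cont Q).mul (gw_cont b)).measurable).aestronglyMeasurable
    (Eventually.of_forall fun x => ?_)
  simp only [norm_mul, Real.norm_eq_abs, map_mul, map_add, map_one, map_pow]
  rw [mul_assoc, abs_of_nonneg (by positivity : 0 ≤ 1 + eval x (Jp M p) ^ 2)]
  exact mul_le_mul_of_nonneg_right (rC_bound M p h0 h1 x) (by positivity)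

lemma rC'_int (M p : ℕ) {δ : ℝ} (h0 : 0 ≤ δ) (h1 : δ ≤ 1) (i : Fin p) (b : ℝ) (hb : 0 < b)
    (Q : MvPolynomial (Fin p) ℝ) : Integrable (fun x => rC' M p δ i x * (eval x Q * gw b x)) := by
  refine (int_poly_gauss b hb (2 * (1 + Jp M p ^ 2) * pderiv i (Jp M p) * Q)).norm.mono'
    ((rC'_meas M p δ i).mul ((eval_cont Q).mul (gw_cont b)).measurable).aestronglyMeasurable
    (Eventually.of_forall fun x => ?_)
  simp only [norm_mul, Real.norm_eq_abs, map_mul, map_add, map_one, map_pow, map_ofNat]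
  rw [mul_assoc _ |eval x Q|, abs_of_nonneg (by positivity : 0 ≤ 1 + eval x (Jp M p) ^ 2),
    abs_of_nonneg (by norm_num : (0:ℝ) ≤ 2)]
  exact mul_le_mul_of_nonneg_right (rC'_bound M p h0 h1 i x) (by positivity)

/-- the linear functional of integration over the cone -/
noncomputable def Kf (M p : ℕ) (b δ : ℝ) (Q : MvPolynomial (Fin p) ℝ) : ℝ :=
  ∫ x, rC M p δ x * (eval x Q * gw b x)

lemma Kf_add (M p : ℕ) {δ : ℝ} (h0 : 0 ≤ δ) (h1 : δ ≤ 1) (b : ℝ) (hb : 0 < b)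
    (Q R : MvPolynomial (Fin p) ℝ) : Kf M p b δ (Q + R) = Kf M p b δ Q + Kf M p b δ R := by
  unfold Kf
  rw [← integral_add (rC_int M p h0 h1 b hb Q) (rC_int M p h0 h1 b hb R)]
  congr 1; ext x; simp; ring

lemma Kf_C_mul (M p : ℕ) (b δ a : ℝ) (Q : MvPolynomial (Fin p) ℝ) :
    Kf M p b δ (C a * Q) = a * Kf M p b δ Q := by
  unfold Kf
  rw [← integral_const_mul]
  congr 1; ext x; simp; ring

lemma Kf_tendsto (M p : ℕ) (b : ℝ) (hb : 0 < b) (Q : MvPolynomial (Fin p) ℝ) :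
    Tendsto (fun n : ℕ => Kf M p b (1 / ((n : ℝ) + 1)) Q) atTop (𝓝 (Kf M p b 0 Q)) := by
  have hd : ∀ n : ℕ, 0 ≤ 1 / ((n : ℝ) + 1) ∧ 1 / ((n : ℝ) + 1) ≤ 1 := by
    intro n
    refine ⟨by positivity, ?_⟩
    rw [div_le_one (by positivity)]
    linarith [Nat.cast_nonneg (α := ℝ) n]
  unfold Kf
  refine tendsto_integral_of_dominated_convergence
    (fun x => ‖eval x ((1 + Jp M p ^ 2) * Q) * gw b x‖)
    (fun n => (rC_int M p (hd n).1 (hd n).2 b hb Q).aestronglyMeasurable)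
    (int_poly_gauss b hb ((1 + Jp M p ^ 2) * Q)).norm
    (fun n => Eventually.of_forall fun x => ?_) (Eventually.of_forall fun x => ?_)
  · simp only [norm_mul, Real.norm_eq_abs, map_mul, map_add, map_one, map_pow]
    rw [mul_assoc, abs_of_nonneg (by positivity : 0 ≤ 1 + eval x (Jp M p) ^ 2)]
    exact mul_le_mul_of_nonneg_right (rC_bound M p (hd n).1 (hd n).2 x) (by positivity)
  · refine Tendsto.mul_const _ ?_
    by_cases hx : x ∈ Cone p
    · simp only [rC, Set.indicator_of_mem hx]
      have h : ContinuousAt (fun s : ℝ => eval x (Jp M p) ^ (1 + s)) 0 := by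
        refine ContinuousAt.comp' (g := fun s => eval x (Jp M p) ^ s) (f := fun s : ℝ => 1 + s) ?_ (by fun_prop)
        exact Real.continuousAt_const_rpow' (by norm_num)
      exact h.tendsto.comp tendsto_one_div_add_atTop_nhds_zero_nat
    · simp only [rC, Set.indicator_of_notMem hx]; exact tendsto_const_nhds

lemma Kf_loop_delta (M p : ℕ) (hM : 1 ≤ M) {δ : ℝ} (h0 : 0 < δ) (h1 : δ ≤ 1) (b : ℝ) (hb : 0 < b)
    (m : ℕ) (f : MvPolynomial ℕ ℝ) :
    Kf M p b δ (evD p (ql (M + p) m * f + Dl m f - C (2 * b) * (X (m + 1) * f)))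
      + δ * Kf M p b δ (evD p f * (evD p (ql (M + p) m)
        - ∑ i : Fin p, pderiv i (X i ^ (2 * m + 1)))) = 0 := by
  have hsum : ∑ i : Fin p, ∫ x, rC M p δ x * (eval x (pderiv i (X i ^ (2 * m + 1) * evD p f)
        - C (2 * b) * (X i * (X i ^ (2 * m + 1) * evD p f))) * gw b x)
      = ∑ i : Fin p, - ∫ x, rC' M p δ i x * (eval x (X i ^ (2 * m + 1) * evD p f) * gw b x) :=
    Finset.sum_congr rfl fun i _ => ibp b i (rC M p δ) (rC' M p δ i) (rC_deriv M p hM δ h0 i)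
      (rC_int M p h0.le h1 b hb) (rC'_int M p h0.le h1 i b hb) _
  rw [Finset.sum_neg_distrib, ← integral_finsetSum _ (fun i _ => rC'_int M p h0.le h1 i b hb _),
    ← integral_finsetSum _ (fun i _ => rC_int M p h0.le h1 b hb _)] at hsum
  set dv := ∑ i : Fin p, pderiv i (X i ^ (2 * m + 1) : MvPolynomial (Fin p) ℝ) with hdv
  have hJ := dD_J M p m
  rw [← hdv] at hJ
  have hL : ∀ x : Fin p → ℝ, ∑ i : Fin p, rC M p δ x * (eval x (pderiv i (X i ^ (2 * m + 1) * evD p f)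
        - C (2 * b) * (X i * (X i ^ (2 * m + 1) * evD p f))) * gw b x) =
      rC M p δ x * (eval x (dv * evD p f + evD p (Dl m f) - C (2 * b) * evD p (X (m + 1) * f)) * gw b x) := by
    intro x
    rw [← Finset.mul_sum, ← Finset.sum_mul, ← map_sum]
    congr 4
    rw [Finset.sum_sub_distrib, ← dD_evD, dD_eq, hdv, Finset.sum_mul, ← Finset.sum_add_distrib]
    congr 1
    · refine Finset.sum_congr rfl fun i _ => ?_
      rw [Derivation.leibniz]; simp only [smul_eq_mul]; ring
    · have hX : evD p (X (m + 1)) = ∑ i : Fin p, X i ^ (2 * (m + 1)) := by simp [evD]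
      rw [← Finset.mul_sum, map_mul (evD p), hX, Finset.sum_mul]
      congr 1
      refine Finset.sum_congr rfl fun i _ => ?_
      ring
  have hR : ∀ x : Fin p → ℝ, ∑ i : Fin p, rC' M p δ i x * (eval x (X i ^ (2 * m + 1) * evD p f) * gw b x)
      = rC M p δ x * (eval x (C (1 + δ) * (evD p f * (evD p (ql (M + p) m) - dv))) * gw b x) := by
    intro x
    by_cases hx : x ∈ Cone p
    · simp only [rC, rC', Set.indicator_of_mem hx]
      have h2 : eval x (dD p m (Jp M p)) = eval x (Jp M p) * eval x (evD p (ql (M + p) m) - dv) := by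
        rw [← map_mul]; congr 1; linear_combination hJ
      have h3 : ∑ i : Fin p, (1 + δ) * eval x (Jp M p) ^ δ * eval x (pderiv i (Jp M p)) *
          (eval x (X i ^ (2 * m + 1) * evD p f) * gw b x) =
          (1 + δ) * eval x (Jp M p) ^ δ * eval x (dD p m (Jp M p)) * (eval x (evD p f) * gw b x) := by
        rw [dD_eq, map_sum, Finset.mul_sum, Finset.sum_mul]
        refine Finset.sum_congr rfl fun i _ => ?_
        simp only [map_mul]; ring
      rw [h3, h2]
      have hn := Jp_nonneg M p hx
      have h4 : eval x (Jp M p) ^ (1 + δ) = eval x (Jp M p) * eval x (Jp M p) ^ δ := by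
        rw [Real.rpow_add' hn (by linarith), Real.rpow_one]
      rw [h4]
      simp only [map_mul, eval_C]; ring
    · simp [rC, rC', Set.indicator_of_notMem hx]
  simp only [hL, hR] at hsum
  change Kf M p b δ _ = - Kf M p b δ _ at hsum
  rw [Kf_C_mul] at hsum
  have hsplit : evD p (ql (M + p) m * f + Dl m f - C (2 * b) * (X (m + 1) * f)) =
      (dv * evD p f + evD p (Dl m f) - C (2 * b) * evD p (X (m + 1) * f))
        + evD p f * (evD p (ql (M + p) m) - dv) := by
    have : evD p (C (2 * b)) = C (2 * b) := (evD p).commutes _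
    rw [map_sub, map_add, map_mul, map_mul (evD p) (C (2 * b)), this]
    ring
  rw [hsplit, Kf_add M p h0.le h1 b hb, hsum]
  ring

lemma Kf_loop (M p : ℕ) (hM : 1 ≤ M) (b : ℝ) (hb : 0 < b) (m : ℕ) (f : MvPolynomial ℕ ℝ) :
    2 * b * Kf M p b 0 (evD p (X (m + 1) * f)) = Kf M p b 0 (evD p (ql (M + p) m * f + Dl m f)) := by
  have h1 : Kf M p b 0 (evD p (ql (M + p) m * f + Dl m f - C (2 * b) * (X (m + 1) * f))) = 0 := by
    have t1 := Kf_tendsto M p b hb (evD p (ql (M + p) m * f + Dl m f - C (2 * b) * (X (m + 1) * f)))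
    have t2 := (tendsto_one_div_add_atTop_nhds_zero_nat (𝕜 := ℝ)).mul
      (Kf_tendsto M p b hb (evD p f * (evD p (ql (M + p) m)
        - ∑ i : Fin p, pderiv i (X i ^ (2 * m + 1)))))
    have t3 := t1.add t2
    rw [zero_mul, add_zero] at t3
    refine tendsto_nhds_unique t3 ?_
    refine tendsto_const_nhds.congr fun n => ?_
    refine (Kf_loop_delta M p hM (by positivity) ?_ b hb m f).symm
    rw [div_le_one (by positivity)]
    linarith [Nat.cast_nonneg (α := ℝ) n]
  have h2 : evD p (C (-(2 * b))) = C (-(2 * b)) := (evD p).commutes _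
  rw [sub_eq_add_neg, ← neg_mul, ← map_neg C, map_add, map_mul, h2,
    Kf_add M p le_rfl zero_le_one b hb, Kf_C_mul] at h1
  linarith

end Icsv

namespace Icsv
open MvPolynomial Filter Topology

/-- Gaussian integration functional -/
noncomputable def El (ι : Type*) [Fintype ι] (b : ℝ) (hb : 0 < b) : MvPolynomial ι ℝ →ₗ[ℝ] ℝ where
  toFun Q := ∫ x : ι → ℝ, eval x Q * gw b x
  map_add' Q R := by
    rw [← integral_add (int_poly_gauss b hb Q) (int_poly_gauss b hb R)]
    congr 1; ext x; simp; ring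
  map_smul' a Q := by
    rw [RingHom.id_apply, smul_eq_mul, ← integral_const_mul]
    congr 1; ext x; simp; ring

noncomputable def Kl (M p : ℕ) (b : ℝ) (hb : 0 < b) : MvPolynomial (Fin p) ℝ →ₗ[ℝ] ℝ where
  toFun Q := Kf M p b 0 Q
  map_add' Q R := Kf_add M p le_rfl zero_le_one b hb Q R
  map_smul' a Q := by
    rw [RingHom.id_apply, smul_eq_mul, MvPolynomial.smul_eq_C_mul, Kf_C_mul]

lemma compare (M p : ℕ) (hM : 1 ≤ M) (b : ℝ) (hb : 0 < b) (f : MvPolynomial ℕ ℝ) :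
    Kl M p b hb 1 * El (Fin (M + p) × Fin p) b hb (evM (M + p) p f)
      = El (Fin (M + p) × Fin p) b hb 1 * Kl M p b hb (evD p f) := by
  set E := El (Fin (M + p) × Fin p) b hb with hE
  set K := Kl M p b hb with hK
  have hEl : ∀ m f, 2 * b * E (evM (M + p) p (X (m + 1) * f))
      = E (evM (M + p) p (ql (M + p) m * f + Dl m f)) :=
    fun m f => loop_matrix (2 * b) E (fun i Q => ibp_gauss b hb i Q) m f
  have hKl : ∀ m f, 2 * b * K (evD p (X (m + 1) * f))
      = K (evD p (ql (M + p) m * f + Dl m f)) := fun m f => Kf_loop M p hM b hb m f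
  have hz := loop_zero (M + p) p (2 * b) (by positivity)
    (K 1 • (E ∘ₗ (evM (M + p) p).toLinearMap) - E 1 • (K ∘ₗ (evD p).toLinearMap)) ?_ ?_ ?_ f
  · simp at hz
    linarith
  · intro f
    simp only [LinearMap.sub_apply, LinearMap.smul_apply, LinearMap.comp_apply,
      AlgHom.toLinearMap_apply, smul_eq_mul, map_mul, evM_zero, evD_zero,
      ← MvPolynomial.smul_eq_C_mul, map_smul]
    ring
  · intro m f
    simp only [LinearMap.sub_apply, LinearMap.smul_apply, LinearMap.comp_apply,
      AlgHom.toLinearMap_apply, smul_eq_mul]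
    rw [← hEl, ← hKl]; ring
  · simp only [LinearMap.sub_apply, LinearMap.smul_apply, LinearMap.comp_apply,
      AlgHom.toLinearMap_apply, smul_eq_mul, map_one]
    ring

lemma gw_smul {ι : Type*} [Fintype ι] (b : ℝ) (hb : 0 < b) (x : ι → ℝ) :
    gw 1 (√b • x) = gw b x := by
  unfold gw
  congr 1
  simp only [Pi.smul_apply, smul_eq_mul, mul_pow, Real.sq_sqrt hb.le, ← Finset.mul_sum]
  ring

lemma El_scale (ι : Type*) [Fintype ι] (b : ℝ) (hb : 0 < b) :
    (√b) ^ Fintype.card ι * El ι b hb 1 = El ι 1 one_pos 1 := by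
  have h := Measure.integral_comp_smul_of_nonneg (volume : Measure (ι → ℝ)) (fun x => gw 1 x) (√b)
    (hR := Real.sqrt_nonneg b)
  simp only [gw_smul b hb, Module.finrank_fintype_fun_eq_card, smul_eq_mul] at h
  have hs : (√b) ^ Fintype.card ι ≠ 0 := pow_ne_zero _ (Real.sqrt_pos.mpr hb).ne'
  simp only [El, LinearMap.coe_mk, AddHom.coe_mk, map_one, one_mul]
  rw [h, mul_inv_cancel_left₀ hs]

lemma Jp_smul (M p : ℕ) (s : ℝ) (x : Fin p → ℝ) :
    s ^ p * eval (s • x) (Jp M p) = s ^ ((M + p) * p) * eval x (Jp M p) := by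
  rw [eval_Jp, eval_Jp]
  have h1 : ∏ i, (s • x) i ^ M = s ^ (M * p) * ∏ i, x i ^ M := by
    simp only [Pi.smul_apply, smul_eq_mul, mul_pow, Finset.prod_mul_distrib]
    simp [pow_mul]
  have h2 : ∏ i : Fin p, ∏ j ∈ Finset.Ioi i, ((s • x) i ^ 2 - (s • x) j ^ 2)
      = s ^ (p * (p - 1)) * ∏ i : Fin p, ∏ j ∈ Finset.Ioi i, (x i ^ 2 - x j ^ 2) := by
    have : ∀ i j : Fin p, ((s • x) i ^ 2 - (s • x) j ^ 2) = s ^ 2 * (x i ^ 2 - x j ^ 2) := by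
      intro i j; simp only [Pi.smul_apply, smul_eq_mul]; ring
    simp only [this, Finset.prod_mul_distrib, Finset.prod_const, Fin.card_Ioi]
    congr 1
    simp only [← pow_mul]
    rw [Finset.prod_pow_eq_pow_sum, Fin.sum_univ_eq_sum_range (fun i => 2 * (p - 1 - i)) p,
      ← Finset.mul_sum, Finset.sum_range_reflect (fun i => i) p, mul_comm 2, Finset.sum_range_id_mul_two]
  rw [h1, h2]
  have h3 : (M + p) * p = p + M * p + p * (p - 1) := by
    rcases p with _ | p
    · simp
    · simp; ring
  rw [h3, pow_add, pow_add]; ring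

lemma cone_smul (p : ℕ) {s : ℝ} (hs : 0 < s) (x : Fin p → ℝ) : s • x ∈ Cone p ↔ x ∈ Cone p := by
  constructor
  · rintro ⟨h1, h2⟩
    exact ⟨fun i j hij => le_of_mul_le_mul_left (h1 hij) hs,
      fun i => nonneg_of_mul_nonneg_right (h2 i) hs⟩
  · rintro ⟨h1, h2⟩
    exact ⟨fun i j hij => mul_le_mul_of_nonneg_left (h1 hij) hs.le,
      fun i => mul_nonneg hs.le (h2 i)⟩

lemma rC_smul (M p : ℕ) {s : ℝ} (hs : 0 < s) (x : Fin p → ℝ) :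
    s ^ p * rC M p 0 (s • x) = s ^ ((M + p) * p) * rC M p 0 x := by
  by_cases hx : x ∈ Cone p
  · rw [rC, rC, Set.indicator_of_mem hx, Set.indicator_of_mem ((cone_smul p hs x).mpr hx)]
    simp only [add_zero, Real.rpow_one]
    exact Jp_smul M p s x
  · rw [rC, rC, Set.indicator_of_notMem hx, Set.indicator_of_notMem (mt (cone_smul p hs x).mp hx)]
    simp

lemma Kl_scale (M p : ℕ) (b : ℝ) (hb : 0 < b) :
    (√b) ^ ((M + p) * p) * Kl M p b hb 1 = Kl M p 1 one_pos 1 := by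
  have hs := Real.sqrt_pos.mpr hb
  have h := Measure.integral_comp_smul_of_nonneg (volume : Measure (Fin p → ℝ))
    (fun x => rC M p 0 x * gw 1 x) (√b) (hR := Real.sqrt_nonneg b)
  simp only [gw_smul b hb, Module.finrank_fintype_fun_eq_card, smul_eq_mul, Fintype.card_fin] at h
  simp only [Kl, Kf, LinearMap.coe_mk, AddHom.coe_mk, map_one, one_mul]
  rw [← integral_const_mul]
  simp only [← mul_assoc, ← rC_smul M p hs]
  simp only [mul_assoc]
  rw [integral_const_mul, h, mul_inv_cancel_left₀ (pow_pos hs p).ne']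

lemma El_pos (ι : Type*) [Fintype ι] (b : ℝ) (hb : 0 < b) : 0 < El ι b hb 1 := by
  simp only [El, LinearMap.coe_mk, AddHom.coe_mk, map_one, one_mul]
  rw [integral_pos_iff_support_of_nonneg (fun x => (gw_pos b x).le)
    (by simpa using int_poly_gauss b hb (1 : MvPolynomial ι ℝ))]
  have : Function.support (gw b : (ι → ℝ) → ℝ) = Set.univ := by
    ext x; simp [(gw_pos b x).ne']
  rw [this]
  simp [pos_iff_ne_zero, NeZero.ne]

lemma rC_nonneg (M p : ℕ) (x : Fin p → ℝ) : 0 ≤ rC M p 0 x := by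
  by_cases hx : x ∈ Cone p
  · rw [rC, Set.indicator_of_mem hx]; exact Real.rpow_nonneg (Jp_nonneg M p hx) _
  · rw [rC, Set.indicator_of_notMem hx]

lemma Kl_pos (M p : ℕ) (hM : 1 ≤ M) (b : ℝ) (hb : 0 < b) : 0 < Kl M p b hb 1 := by
  simp only [Kl, Kf, LinearMap.coe_mk, AddHom.coe_mk, map_one, one_mul]
  rw [integral_pos_iff_support_of_nonneg
    (fun x => mul_nonneg (rC_nonneg M p x) (gw_pos b x).le)
    (by simpa using rC_int M p le_rfl zero_le_one b hb (1 : MvPolynomial (Fin p) ℝ))]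
  set x0 : Fin p → ℝ := fun i => (p : ℝ) - i with hx0
  have hc : x0 ∈ Cone p := by
    refine ⟨fun i j hij => ?_, fun i => ?_⟩
    · have : ((i : ℕ) : ℝ) ≤ ((j : ℕ) : ℝ) := Nat.cast_le.mpr hij
      simp only [hx0]; linarith
    · have : ((i : ℕ) : ℝ) ≤ (p : ℝ) := Nat.cast_le.mpr i.2.le
      simp only [hx0]; linarith
  have hpos : ∀ i, 0 < x0 i := by
    intro i
    have : ((i : ℕ) : ℝ) < (p : ℝ) := Nat.cast_lt.mpr i.2
    simp only [hx0]; linarith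
  have hJ : eval x0 (Jp M p) ≠ 0 := by
    rw [eval_Jp]
    refine mul_ne_zero (Finset.prod_ne_zero_iff.mpr fun i _ => pow_ne_zero _ (hpos i).ne')
      (Finset.prod_ne_zero_iff.mpr fun i _ => Finset.prod_ne_zero_iff.mpr fun j hj => ?_)
    have h1 : x0 j < x0 i := by
      have : ((i : ℕ) : ℝ) < ((j : ℕ) : ℝ) := Nat.cast_lt.mpr (Fin.lt_def.mp (Finset.mem_Ioi.mp hj))
      simp only [hx0]; linarith
    have := hpos j
    nlinarith
  have hn : Function.support (fun x : Fin p → ℝ => rC M p 0 x * gw b x) ∈ 𝓝 x0 := by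
    filter_upwards [cone_nhds M p hM hc hJ,
      (eval_cont (Jp M p)).continuousAt.eventually_ne hJ] with x hx1 hx2
    have hx1' : x ∈ Cone p := hx1
    rw [Function.mem_support, rC, Set.indicator_of_mem hx1']
    simp only [add_zero, Real.rpow_one]
    exact mul_ne_zero hx2 (gw_pos b x).ne'
  exact Measure.measure_pos_of_mem_nhds volume hn

/-- The Gaussian matrix functional is a fixed multiple of the cone functional. -/
lemma compare' (M p : ℕ) (hM : 1 ≤ M) : ∃ κ : ℝ, 0 < κ ∧ ∀ (b : ℝ) (hb : 0 < b)
    (f : MvPolynomial ℕ ℝ),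
    ∫ x : Fin (M + p) × Fin p → ℝ, eval x (evM (M + p) p f) * gw b x
      = κ * ∫ x, rC M p 0 x * (eval x (evD p f) * gw b x) := by
  refine ⟨El (Fin (M + p) × Fin p) 1 one_pos 1 / Kl M p 1 one_pos 1,
    div_pos (El_pos _ _ _) (Kl_pos M p hM _ _), fun b hb f => ?_⟩
  have h := compare M p hM b hb f
  have hE := El_scale (Fin (M + p) × Fin p) b hb
  have hK := Kl_scale M p b hb
  simp only [Fintype.card_prod, Fintype.card_fin] at hE
  change El (Fin (M + p) × Fin p) b hb (evM (M + p) p f) = _ * Kl M p b hb (evD p f)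
  rw [← hE, ← hK]
  have hs : (√b) ^ ((M + p) * p) ≠ 0 := pow_ne_zero _ (Real.sqrt_pos.mpr hb).ne'
  have hk := (Kl_pos M p hM b hb).ne'
  field_simp
  linarith

end Icsv

namespace Icsv
open MvPolynomial Filter Topology BoundedContinuousFunction

lemma pi_gauss_density {ι : Type*} [Fintype ι] (σ : ℝ) (hσ : 0 < σ) (v : NNReal)
    (hvc : (v : ℝ) = σ ^ 2) : ∃ c : ℝ, 0 < c ∧ Measure.pi (fun _ : ι => gaussianReal 0 v)
      = (volume : Measure (ι → ℝ)).withDensity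
          (fun x => ENNReal.ofReal (c * gw (1 / (2 * σ ^ 2)) x)) := by
  have hv0 : v ≠ 0 := by
    intro h
    rw [h, NNReal.coe_zero] at hvc
    exact absurd hvc (by positivity)
  have hvp : 0 < (v : ℝ) := by rw [hvc]; positivity
  refine ⟨((√(2 * Real.pi * v))⁻¹) ^ Fintype.card ι, by positivity, ?_⟩
  have hprod : ∀ x : ι → ℝ, ((√(2 * Real.pi * v))⁻¹) ^ Fintype.card ι * gw (1 / (2 * σ ^ 2)) x
      = ∏ i, gaussianPDFReal 0 v (x i) := by
    intro x
    simp only [gaussianPDFReal, Finset.prod_mul_distrib, Finset.prod_const, Finset.card_univ,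
      gw_eq_prod]
    congr 1
    refine Finset.prod_congr rfl fun i _ => ?_
    congr 1
    rw [hvc]; field_simp; ring
  refine (Measure.pi_eq fun s hs => ?_)
  rw [withDensity_apply _ (MeasurableSet.univ_pi hs)]
  simp only [hprod]
  have hintg : Integrable (fun x : ι → ℝ => ∏ i, gaussianPDFReal 0 v (x i)) :=
    Integrable.fintype_prod (f := fun _ => gaussianPDFReal 0 v) fun i => integrable_gaussianPDFReal 0 v
  rw [← ofReal_integral_eq_lintegral_ofReal hintg.integrableOn
    (Eventually.of_forall fun x => Finset.prod_nonneg fun i _ => gaussianPDFReal_nonneg _ _ _),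
    ← integral_indicator (MeasurableSet.univ_pi hs)]
  have hind : ∀ x : ι → ℝ, (Set.univ.pi s).indicator (fun x => ∏ i, gaussianPDFReal 0 v (x i)) x
      = ∏ i, (s i).indicator (gaussianPDFReal 0 v) (x i) := by
    intro x
    by_cases hx : x ∈ Set.univ.pi s
    · rw [Set.indicator_of_mem hx]
      exact Finset.prod_congr rfl fun i _ => (Set.indicator_of_mem (hx i trivial) _).symm
    · rw [Set.indicator_of_notMem hx]
      simp only [Set.mem_pi, Set.mem_univ, forall_true_left, not_forall] at hx
      obtain ⟨i, hi⟩ := hx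
      exact (Finset.prod_eq_zero (Finset.mem_univ i) (Set.indicator_of_notMem hi _)).symm
  simp only [hind]
  rw [integral_fintype_prod_volume_eq_prod (fun i => (s i).indicator (gaussianPDFReal 0 v)),
    ENNReal.ofReal_prod_of_nonneg]
  · refine Finset.prod_congr rfl fun i _ => ?_
    rw [gaussianReal_apply_eq_integral 0 hv0, integral_indicator (hs i)]
  · exact fun i _ => integral_nonneg fun x => Set.indicator_nonneg (fun _ _ => gaussianPDFReal_nonneg _ _ _) _

lemma powersum_inj {p : ℕ} {x y : Fin p → ℝ} (hx : x ∈ Cone p) (hy : y ∈ Cone p)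
    (h : ∀ m : ℕ, ∑ i, x i ^ (2 * m) = ∑ i, y i ^ (2 * m)) : x = y := by
  classical
  have hpoly : ∀ R : Polynomial ℝ, ∑ i, R.eval (x i ^ 2) = ∑ i, R.eval (y i ^ 2) := by
    intro R
    simp only [Polynomial.eval_eq_sum_range]
    rw [Finset.sum_comm, Finset.sum_comm (s := Finset.univ)]
    refine Finset.sum_congr rfl fun m _ => ?_
    simp only [← Finset.mul_sum, ← pow_mul]
    rw [h m]
  have hcard : ∀ t : ℝ, (Finset.univ.filter fun i => x i ^ 2 = t).card
      = (Finset.univ.filter fun i => y i ^ 2 = t).card := by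
    intro t
    set S : Finset ℝ := (Finset.univ.image (fun i => x i ^ 2) ∪ Finset.univ.image (fun i => y i ^ 2)).erase t
    set R : Polynomial ℝ := ∏ s ∈ S, (Polynomial.X - Polynomial.C s) with hR
    have hRt : R.eval t ≠ 0 := by
      rw [hR, Polynomial.eval_prod, Finset.prod_ne_zero_iff]
      intro s hs
      simp only [Polynomial.eval_sub, Polynomial.eval_X, Polynomial.eval_C]
      exact sub_ne_zero.mpr (Finset.ne_of_mem_erase hs).symm
    have hR0 : ∀ u, u ∈ Finset.univ.image (fun i => x i ^ 2) ∪ Finset.univ.image (fun i => y i ^ 2) →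
        R.eval u = if u = t then R.eval t else 0 := by
      intro u hu
      split_ifs with hut
      · rw [hut]
      · rw [hR, Polynomial.eval_prod]
        refine Finset.prod_eq_zero (Finset.mem_erase.mpr ⟨hut, hu⟩) (by simp)
    have h1 : ∑ i, R.eval (x i ^ 2) = (Finset.univ.filter fun i => x i ^ 2 = t).card * R.eval t := by
      rw [Finset.sum_congr rfl fun i _ => hR0 (x i ^ 2) (Finset.mem_union_left _ (Finset.mem_image_of_mem _ (Finset.mem_univ i)))]
      rw [← Finset.sum_filter, Finset.sum_const, nsmul_eq_mul]
    have h2 : ∑ i, R.eval (y i ^ 2) = (Finset.univ.filter fun i => y i ^ 2 = t).card * R.eval t := by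
      rw [Finset.sum_congr rfl fun i _ => hR0 (y i ^ 2) (Finset.mem_union_right _ (Finset.mem_image_of_mem _ (Finset.mem_univ i)))]
      rw [← Finset.sum_filter, Finset.sum_const, nsmul_eq_mul]
    have h3 := hpoly R
    rw [h1, h2] at h3
    exact_mod_cast mul_right_cancel₀ hRt h3
  have hcard' : ∀ t : ℝ, (Finset.univ.filter fun i => x i = t).card
      = (Finset.univ.filter fun i => y i = t).card := by
    intro t
    by_cases ht : 0 ≤ t
    · have h4 := hcard (t ^ 2)
      have e : ∀ z ∈ Cone p, ∀ i, z i ^ 2 = t ^ 2 ↔ z i = t := fun z hz i => by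
        rw [pow_left_inj₀ (hz.2 i) ht two_ne_zero]
      simpa only [e x hx, e y hy] using h4
    · have e : ∀ z ∈ Cone p, ∀ i, ¬ z i = t := fun z hz i hi => ht (hi ▸ hz.2 i)
      simp only [e x hx, e y hy]
  have hperm : (List.ofFn x).Perm (List.ofFn y) := by
    rw [← Multiset.coe_eq_coe, ← Fin.univ_val_map, ← Fin.univ_val_map]
    ext t
    rw [Multiset.count_map, Multiset.count_map]
    simpa [eq_comm, Finset.card_def] using hcard' t
  exact List.ofFn_injective (hperm.eq_of_sortedGE hx.1.sortedGE_ofFn hy.1.sortedGE_ofFn)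

end Icsv

namespace Icsv
open MvPolynomial Filter Topology BoundedContinuousFunction

/-- test functions: polynomial in `exp (-|x|²)` with coefficients symmetric even polynomials -/
noncomputable def tf (p : ℕ) (x : Fin p → ℝ) : Polynomial (MvPolynomial ℕ ℝ) →+* ℝ :=
  Polynomial.eval₂RingHom ((eval x).comp (evD p : MvPolynomial ℕ ℝ →+* MvPolynomial (Fin p) ℝ)) (gw 1 x)

lemma gw_pow {ι : Type*} [Fintype ι] (x : ι → ℝ) (n : ℕ) : gw 1 x ^ n = gw (n : ℝ) x := by
  unfold gw
  rw [← Real.exp_nat_mul]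
  congr 1; ring

lemma tf_apply (p : ℕ) (x : Fin p → ℝ) (q : Polynomial (MvPolynomial ℕ ℝ)) :
    tf p x q = ∑ n ∈ q.support, eval x (evD p (q.coeff n)) * gw (n : ℝ) x := by
  simp only [← gw_pow]
  simp [tf, Polynomial.eval₂_eq_sum, Polynomial.sum_def]

noncomputable def tfAlg (p : ℕ) : StarSubalgebra ℝ ((Cone p) →ᵇ ℝ) where
  carrier := {F | ∃ q, ∀ x : Cone p, F x = tf p x q}
  mul_mem' := by
    rintro F G ⟨q, hq⟩ ⟨r, hr⟩
    exact ⟨q * r, fun x => by rw [map_mul, ← hq, ← hr]; rfl⟩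
  add_mem' := by
    rintro F G ⟨q, hq⟩ ⟨r, hr⟩
    exact ⟨q + r, fun x => by rw [map_add, ← hq, ← hr]; rfl⟩
  algebraMap_mem' := by
    intro r
    refine ⟨Polynomial.C (C r), fun x => ?_⟩
    have : evD p (C r) = C r := (evD p).commutes r
    simp [tf, this]
  star_mem' := by
    rintro F ⟨q, hq⟩
    exact ⟨q, fun x => by rw [← hq]; simp⟩

lemma tf_bound (p m : ℕ) (x : Fin p → ℝ) :
    ‖tf p x (Polynomial.C (X m) * Polynomial.X)‖ ≤ p * m.factorial := by
  have h1 : tf p x (Polynomial.C (X m) * Polynomial.X) = (∑ i, x i ^ (2 * m)) * gw 1 x := by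
    simp [tf, evD]
  rw [h1, Real.norm_eq_abs, abs_of_nonneg (mul_nonneg (Finset.sum_nonneg fun i _ => by
    rw [pow_mul]; positivity) (gw_pos 1 x).le)]
  set s := ∑ i, x i ^ 2 with hs
  have hs0 : 0 ≤ s := Finset.sum_nonneg fun i _ => sq_nonneg _
  have h2 : ∑ i, x i ^ (2 * m) ≤ p * s ^ m := by
    calc ∑ i, x i ^ (2 * m) ≤ ∑ i : Fin p, s ^ m := by
          refine Finset.sum_le_sum fun i _ => ?_
          rw [pow_mul]
          exact pow_le_pow_left₀ (sq_nonneg _)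
            (Finset.single_le_sum (f := fun i => x i ^ 2) (fun i _ => sq_nonneg _) (Finset.mem_univ i)) _
      _ = _ := by simp
  have h3 := Real.pow_div_factorial_le_exp s hs0 m
  rw [div_le_iff₀ (by positivity)] at h3
  have h4 : gw 1 x = (Real.exp s)⁻¹ := by
    rw [gw, ← Real.exp_neg]; congr 1; rw [← hs]; ring
  rw [h4, ← div_eq_mul_inv, div_le_iff₀ (Real.exp_pos s)]
  calc _ ≤ p * s ^ m := h2
    _ ≤ p * (Real.exp s * m.factorial) := by gcongr
    _ = _ := by ring

lemma tf_cont (p : ℕ) (q : Polynomial (MvPolynomial ℕ ℝ)) : Continuous fun x : Fin p → ℝ => tf p x q := by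
  simp only [tf_apply]
  exact continuous_finsetSum _ fun n _ => (eval_cont _).mul (gw_cont _)

noncomputable def tfB (p m : ℕ) : Cone p →ᵇ ℝ :=
  BoundedContinuousFunction.ofNormedAddCommGroup
    (fun x : Cone p => tf p x (Polynomial.C (X m) * Polynomial.X))
    ((tf_cont p _).comp continuous_subtype_val) (p * m.factorial) (fun x => tf_bound p m x)

lemma tf_sep (p : ℕ) : ((tfAlg p).map (toContinuousMapStarₐ ℝ)).SeparatesPoints := by
  intro x y hxy
  have : ∃ m, tfB p m x ≠ tfB p m y := by
    by_contra hcon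
    push Not at hcon
    apply hxy
    have hv : ∀ (z : Cone p) m, tfB p m z = (∑ i, (z : Fin p → ℝ) i ^ (2 * m)) * gw 1 (z : Fin p → ℝ) := by
      intro z m
      simp [tfB, tf, evD]
    rcases Nat.eq_zero_or_pos p with hp | hp
    · subst hp
      exact Subtype.ext (Subsingleton.elim _ _)
    have h0 := hcon 0
    rw [hv, hv] at h0
    simp only [mul_zero, pow_zero, Finset.sum_const, Finset.card_univ, Fintype.card_fin, nsmul_eq_mul, mul_one] at h0
    have hp' : (p : ℝ) ≠ 0 := by positivity
    have h1 := mul_left_cancel₀ hp' h0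
    refine Subtype.ext (powersum_inj x.2 y.2 fun m => ?_)
    have h2 := hcon m
    rw [hv, hv, h1] at h2
    exact mul_right_cancel₀ (gw_pos 1 _).ne' h2
  obtain ⟨m, hm⟩ := this
  refine ⟨_, ⟨toContinuousMapStarₐ ℝ (tfB p m), ⟨tfB p m, ⟨_, fun x => rfl⟩, rfl⟩, rfl⟩, hm⟩

lemma meas_unique (p : ℕ) (ν ν' : Measure (Fin p → ℝ)) [IsFiniteMeasure ν] [IsFiniteMeasure ν']
    (h1 : ∀ᵐ x ∂ν, x ∈ Cone p) (h1' : ∀ᵐ x ∂ν', x ∈ Cone p)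
    (hi : ∀ (n : ℕ) f, Integrable (fun x => eval x (evD p f) * gw (n : ℝ) x) ν)
    (hi' : ∀ (n : ℕ) f, Integrable (fun x => eval x (evD p f) * gw (n : ℝ) x) ν')
    (he : ∀ (n : ℕ) f, ∫ x, eval x (evD p f) * gw (n : ℝ) x ∂ν = ∫ x, eval x (evD p f) * gw (n : ℝ) x ∂ν') :
    ν = ν' := by
  have hm := (cone_closed p).measurableSet
  have : PolishSpace (Cone p) := (cone_closed p).polishSpace
  have key : ν.comap (Subtype.val : Cone p → _) = ν'.comap (Subtype.val : Cone p → _) := by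
    have f1 : IsFiniteMeasure (ν.comap (Subtype.val : Cone p → _)) := inferInstance
    have f2 : IsFiniteMeasure (ν'.comap (Subtype.val : Cone p → _)) := inferInstance
    refine ext_of_forall_mem_subalgebra_integral_eq_of_polish (𝕜 := ℝ) (A := tfAlg p) (tf_sep p) ?_
    rintro F ⟨q, hq⟩
    simp only [hq]
    rw [integral_subtype_comap hm (fun x => tf p x q), integral_subtype_comap hm (fun x => tf p x q),
      Measure.restrict_eq_self_of_ae_mem h1, Measure.restrict_eq_self_of_ae_mem h1']
    simp only [tf_apply]
    rw [integral_finsetSum _ (fun n _ => hi n _), integral_finsetSum _ (fun n _ => hi' n _)]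
    exact Finset.sum_congr rfl fun n _ => he n _
  have h := congrArg (Measure.map (Subtype.val : Cone p → _)) key
  rwa [map_comap_subtype_coe hm, map_comap_subtype_coe hm,
    Measure.restrict_eq_self_of_ae_mem h1, Measure.restrict_eq_self_of_ae_mem h1'] at h

lemma svd_pow {N p : ℕ} (Y U : Matrix (Fin N) (Fin p) ℝ) (V : Matrix (Fin p) (Fin p) ℝ) (d : Fin p → ℝ)
    (h : Y = U * Matrix.diagonal d * Vᵀ) (hU : Uᵀ * U = 1) (hV : Vᵀ * V = 1) (m : ℕ) :
    (Yᵀ * Y) ^ m = V * Matrix.diagonal (fun i => d i ^ (2 * m)) * Vᵀ := by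
  have hV' : V * Vᵀ = 1 := mul_eq_one_comm.mp hV
  have hW : Yᵀ * Y = V * Matrix.diagonal (fun i => d i ^ 2) * Vᵀ := by
    rw [h]
    simp only [Matrix.transpose_mul, Matrix.transpose_transpose, Matrix.diagonal_transpose]
    calc V * (diagonal d * Uᵀ) * (U * diagonal d * Vᵀ)
        = V * diagonal d * (Uᵀ * U) * diagonal d * Vᵀ := by simp only [Matrix.mul_assoc]
      _ = _ := by
        rw [hU, Matrix.mul_one, Matrix.mul_assoc V, Matrix.diagonal_mul_diagonal]
        simp only [sq]
  induction m with
  | zero => simp [hV']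
  | succ m ih =>
    rw [pow_succ, ih, hW]
    calc V * diagonal (fun i => d i ^ (2 * m)) * Vᵀ * (V * diagonal (fun i => d i ^ 2) * Vᵀ)
        = V * diagonal (fun i => d i ^ (2 * m)) * (Vᵀ * V) * diagonal (fun i => d i ^ 2) * Vᵀ := by
          simp only [Matrix.mul_assoc]
      _ = _ := by
        rw [hV, Matrix.mul_one, Matrix.mul_assoc V, Matrix.diagonal_mul_diagonal]
        simp only [← pow_add, mul_add, mul_one]

lemma svd_trace {N p : ℕ} (Y U : Matrix (Fin N) (Fin p) ℝ) (V : Matrix (Fin p) (Fin p) ℝ) (d : Fin p → ℝ)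
    (h : Y = U * Matrix.diagonal d * Vᵀ) (hU : Uᵀ * U = 1) (hV : Vᵀ * V = 1) (m : ℕ) :
    trace ((Yᵀ * Y) ^ m) = ∑ i, d i ^ (2 * m) := by
  rw [svd_pow Y U V d h hU hV, Matrix.trace_mul_comm, ← Matrix.mul_assoc, hV, Matrix.one_mul,
    Matrix.trace_diagonal]

lemma eval_evM {N p : ℕ} (Y U : Matrix (Fin N) (Fin p) ℝ) (V : Matrix (Fin p) (Fin p) ℝ) (d : Fin p → ℝ)
    (h : Y = U * Matrix.diagonal d * Vᵀ) (hU : Uᵀ * U = 1) (hV : Vᵀ * V = 1) (f : MvPolynomial ℕ ℝ) :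
    eval (fun ij : Fin N × Fin p => Y ij.1 ij.2) (evM N p f) = eval d (evD p f) := by
  set x := (fun ij : Fin N × Fin p => Y ij.1 ij.2) with hx
  have hX : ∀ m, eval x (evM N p (X m)) = ∑ i, d i ^ (2 * m) := by
    intro m
    rw [← svd_trace Y U V d h hU hV]
    have hYm : (Ym N p).map (eval x) = Y := by
      ext i j; simp [Ym, hx]
    have hWm : (Wm N p).map (eval x) = Yᵀ * Y := by
      rw [Wm, Matrix.map_mul, Matrix.transpose_map, hYm]
    rw [evM, aeval_X, ← hWm, ← Matrix.map_pow, AddMonoidHom.map_trace]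
  induction f using MvPolynomial.induction_on with
  | C a => simp [evM, evD]
  | add f g hf hg => simp only [map_add, hf, hg]
  | mul_X f m hf => rw [map_mul, map_mul, map_mul, map_mul, hf, hX]; simp [evD]

lemma gw_svd {N p : ℕ} (Y U : Matrix (Fin N) (Fin p) ℝ) (V : Matrix (Fin p) (Fin p) ℝ) (d : Fin p → ℝ)
    (h : Y = U * Matrix.diagonal d * Vᵀ) (hU : Uᵀ * U = 1) (hV : Vᵀ * V = 1) (b : ℝ) :
    gw b (fun ij : Fin N × Fin p => Y ij.1 ij.2) = gw b d := by
  have h1 := svd_trace Y U V d h hU hV 1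
  simp only [pow_one, mul_one, Matrix.trace, Matrix.diag, Matrix.mul_apply, Matrix.transpose_apply] at h1
  unfold gw
  rw [← h1, Fintype.sum_prod_type, Finset.sum_comm]
  simp only [sq]

end Icsv

namespace Icsv
open MvPolynomial Filter Topology

lemma wd_integral {α : Type*} [MeasurableSpace α] (μ : Measure α) (ρ F : α → ℝ) (hρ : Measurable ρ)
    (h0 : ∀ x, 0 ≤ ρ x) :
    ∫ x, F x ∂(μ.withDensity fun x => ENNReal.ofReal (ρ x)) = ∫ x, ρ x * F x ∂μ := by
  rw [integral_withDensity_eq_integral_toReal_smul hρ.ennreal_ofReal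
    (Eventually.of_forall fun x => ENNReal.ofReal_lt_top)]
  simp only [ENNReal.toReal_ofReal (h0 _), smul_eq_mul]

lemma wd_integrable {α : Type*} [MeasurableSpace α] (μ : Measure α) (ρ F : α → ℝ) (hρ : Measurable ρ)
    (h0 : ∀ x, 0 ≤ ρ x) :
    Integrable F (μ.withDensity fun x => ENNReal.ofReal (ρ x)) ↔ Integrable (fun x => ρ x * F x) μ := by
  rw [integrable_withDensity_iff_integrable_smul' hρ.ennreal_ofReal
    (Eventually.of_forall fun x => ENNReal.ofReal_lt_top)]
  simp only [ENNReal.toReal_ofReal (h0 _), smul_eq_mul]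

lemma gw_add {ι : Type*} [Fintype ι] (b c : ℝ) (x : ι → ℝ) : gw b x * gw c x = gw (b + c) x := by
  unfold gw
  rw [← Real.exp_add]; congr 1; ring

lemma law_d (M p : ℕ) (hM : 1 ≤ M) (σ : ℝ) (hσ : 0 < σ) (v : NNReal) (hv : (v : ℝ) = σ ^ 2)
    {Ω : Type} [MeasurableSpace Ω] (P : Measure Ω) [IsProbabilityMeasure P]
    (Y U : Ω → Fin (M + p) → Fin p → ℝ) (V : Ω → Fin p → Fin p → ℝ) (d : Ω → Fin p → ℝ)
    (hYm : Measurable Y) (hdm : Measurable d)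
    (hlaw : Measure.map Y P =
      Measure.pi (fun _ : Fin (M + p) => Measure.pi (fun _ : Fin p =>
        gaussianReal 0 v)))
    (hSVD : ∀ ω, Matrix.of (Y ω) =
      Matrix.of (U ω) * Matrix.diagonal (d ω) * (Matrix.of (V ω))ᵀ)
    (hUorth : ∀ ω, (Matrix.of (U ω))ᵀ * Matrix.of (U ω) = 1)
    (hVorth : ∀ ω, (Matrix.of (V ω))ᵀ * Matrix.of (V ω) = 1)
    (hanti : ∀ ω, Antitone (d ω))
    (hnonneg : ∀ ω i, 0 ≤ d ω i) :
    ∃ c : ℝ, 0 < c ∧ Measure.map d P = (volume : Measure (Fin p → ℝ)).withDensity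
      (fun x => ENNReal.ofReal (c * (rC M p 0 x * gw (1 / (2 * σ ^ 2)) x))) := by
  set b := 1 / (2 * σ ^ 2) with hb
  have hb0 : 0 < b := by positivity
  obtain ⟨κ, hκ, hcmp⟩ := compare' M p hM
  obtain ⟨c, hc, hpi⟩ := pi_gauss_density (ι := Fin (M + p) × Fin p) σ hσ v hv
  rw [← hb] at hpi
  set Z : Ω → (Fin (M + p) × Fin p → ℝ) := fun ω ij => Y ω ij.1 ij.2 with hZ
  have hZm : Measurable Z := by
    refine measurable_pi_lambda _ fun ij => ?_
    exact (measurable_pi_apply ij.2).comp ((measurable_pi_apply ij.1).comp hYm)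
  have hZlaw : Measure.map Z P = (volume : Measure (Fin (M + p) × Fin p → ℝ)).withDensity
          (fun x => ENNReal.ofReal (c * gw b x)) := by
    rw [← hpi]
    have h1 := Measure.infinitePi_map_curry_symm
      (fun (_ : Fin (M + p)) (_ : Fin p) => gaussianReal 0 v)
    simp only [Measure.infinitePi_eq_pi] at h1
    rw [← h1, ← hlaw, Measure.map_map (MeasurableEquiv.measurable _) hYm]
    rfl
  have hρm : Measurable fun x : Fin (M + p) × Fin p → ℝ => c * gw b x :=
    ((gw_cont b).measurable).const_mul c
  have hρ0 : ∀ x : Fin (M + p) × Fin p → ℝ, 0 ≤ c * gw b x := fun x => mul_nonneg hc.le (gw_pos b x).le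
  have hρm' : Measurable fun x : Fin p → ℝ => c * κ * (rC M p 0 x * gw b x) :=
    ((rC_meas M p 0).mul (gw_cont b).measurable).const_mul _
  have hρ0' : ∀ x : Fin p → ℝ, 0 ≤ c * κ * (rC M p 0 x * gw b x) := fun x =>
    mul_nonneg (mul_pos hc hκ).le (mul_nonneg (rC_nonneg M p x) (gw_pos b x).le)
  have hbn : ∀ n : ℕ, 0 < b + n := fun n => by positivity
  have hev : ∀ (n : ℕ) f ω, eval (d ω) (evD p f) * gw (n : ℝ) (d ω)
      = eval (Z ω) (evM (M + p) p f) * gw (n : ℝ) (Z ω) := by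
    intro n f ω
    have h1 := eval_evM (Matrix.of (Y ω)) _ _ _ (hSVD ω) (hUorth ω) (hVorth ω) f
    have h2 := gw_svd (Matrix.of (Y ω)) _ _ _ (hSVD ω) (hUorth ω) (hVorth ω) (n : ℝ)
    rw [← h1, ← h2]; rfl
  have hcf : ∀ (n : ℕ) f, Continuous fun x : Fin p → ℝ => eval x (evD p f) * gw (n : ℝ) x :=
    fun n f => (eval_cont _).mul (gw_cont _)
  have hcZ : ∀ (n : ℕ) f, Continuous fun x : Fin (M + p) × Fin p → ℝ =>
      eval x (evM (M + p) p f) * gw (n : ℝ) x :=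
    fun n f => (eval_cont _).mul (gw_cont _)
  have r1 : ∀ (n : ℕ) f (x : Fin (M + p) × Fin p → ℝ), c * gw b x * (eval x (evM (M + p) p f) * gw (n : ℝ) x)
      = c * (eval x (evM (M + p) p f) * gw (b + n) x) := by
    intro n f x; rw [← gw_add]; ring
  have r2 : ∀ (n : ℕ) f (x : Fin p → ℝ), c * κ * (rC M p 0 x * gw b x) * (eval x (evD p f) * gw (n : ℝ) x)
      = c * κ * (rC M p 0 x * (eval x (evD p f) * gw (b + n) x)) := by
    intro n f x; rw [← gw_add]; ring
  refine ⟨c * κ, mul_pos hc hκ, ?_⟩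
  have : IsProbabilityMeasure (Measure.map d P) := Measure.isProbabilityMeasure_map hdm.aemeasurable
  have : IsFiniteMeasure ((volume : Measure (Fin p → ℝ)).withDensity
      (fun x => ENNReal.ofReal (c * κ * (rC M p 0 x * gw b x)))) := by
    refine isFiniteMeasure_withDensity_ofReal (Integrable.hasFiniteIntegral ?_)
    have := (rC_int M p le_rfl zero_le_one b hb0 1).const_mul (c * κ)
    simpa using this
  refine meas_unique p _ _ ?_ ?_ ?_ ?_ ?_
  · have hae := ae_map_iff (μ := P) (p := fun x => x ∈ Cone p) hdm.aemeasurable (cone_closed p).measurableSet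
    rw [hae]
    exact Eventually.of_forall fun ω => ⟨hanti ω, hnonneg ω⟩
  · rw [ae_withDensity_iff hρm'.ennreal_ofReal]
    refine Eventually.of_forall fun x hx => ?_
    by_contra hcon
    apply hx
    simp [rC, Set.indicator_of_notMem hcon]
  · intro n f
    rw [integrable_map_measure (hcf n f).aestronglyMeasurable hdm.aemeasurable]
    have h3 : Integrable (fun x => eval x (evM (M + p) p f) * gw (n : ℝ) x) (Measure.map Z P) := by
      rw [hZlaw, wd_integrable _ _ _ hρm hρ0]
      simp only [r1]
      exact (int_poly_gauss _ (hbn n) _).const_mul c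
    rw [integrable_map_measure (hcZ n f).aestronglyMeasurable hZm.aemeasurable] at h3
    refine h3.congr (Eventually.of_forall fun ω => ?_)
    exact (hev n f ω).symm
  · intro n f
    rw [wd_integrable _ _ _ hρm' hρ0']
    simp only [r2]
    exact (rC_int M p le_rfl zero_le_one _ (hbn n) _).const_mul _
  · intro n f
    rw [integral_map hdm.aemeasurable (hcf n f).aestronglyMeasurable]
    simp only [hev n f]
    rw [← integral_map (φ := Z) (f := fun x => eval x (evM (M + p) p f) * gw (n : ℝ) x)
      hZm.aemeasurable (hcZ n f).aestronglyMeasurable, hZlaw, wd_integral _ _ _ hρm hρ0,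
      wd_integral _ _ _ hρm' hρ0']
    simp only [r1, r2]
    rw [integral_const_mul, integral_const_mul, hcmp _ (hbn n)]
    ring

end Icsv

namespace Icsv
open Filter Topology

def Mk (p k : ℕ) : Matrix (Fin p) (Fin p) ℝ :=
  Matrix.diagonal (fun j : Fin p => if k ≤ (j : ℕ) then (1:ℝ) else 0)

/-- `Y` has an SVD satisfying the null constraint -/
def Good (N p k : ℕ) (B Y U : Matrix (Fin N) (Fin p) ℝ) (V : Matrix (Fin p) (Fin p) ℝ) : Prop :=
  Uᵀ * Y * V = Matrix.diagonal (Uᵀ * Y * V).diag ∧ Y = U * (Uᵀ * Y * V) * Vᵀ ∧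
  Antitone (Uᵀ * Y * V).diag ∧ (∀ i, 0 ≤ (Uᵀ * Y * V).diag i) ∧
  U * Mk p k * Uᵀ * B * (V * Mk p k * Vᵀ) = 0

lemma orth_entry_le {N p : ℕ} {U : Matrix (Fin N) (Fin p) ℝ} (h : Uᵀ * U = 1) (i : Fin N) (j : Fin p) :
    |U i j| ≤ 1 := by
  have h1 := congrFun (congrFun h j) j
  simp only [Matrix.mul_apply, Matrix.transpose_apply, Matrix.one_apply_eq] at h1
  have h2 : U i j * U i j ≤ 1 := by
    rw [← h1]
    exact Finset.single_le_sum (f := fun i => U i j * U i j) (fun i _ => mul_self_nonneg _) (Finset.mem_univ i)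
  exact abs_le_one_iff_mul_self_le_one.mpr h2

lemma orth_compact (N p : ℕ) : IsCompact {U : Matrix (Fin N) (Fin p) ℝ | Uᵀ * U = 1} := by
  have hc : IsCompact (Set.univ.pi fun _ : Fin N => Set.univ.pi fun _ : Fin p => Set.Icc (-1:ℝ) 1) :=
    isCompact_univ_pi fun _ => isCompact_univ_pi fun _ => isCompact_Icc
  refine IsCompact.of_isClosed_subset hc ?_ ?_
  · refine isClosed_eq ?_ continuous_const
    exact Continuous.matrix_mul (Continuous.matrix_transpose continuous_id) continuous_id
  · intro U hU i _ j _
    exact abs_le.mp (orth_entry_le hU i j)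

lemma good_closed (N p k : ℕ) (B : Matrix (Fin N) (Fin p) ℝ) :
    IsClosed {Y : Matrix (Fin N) (Fin p) ℝ | ∃ (U : Matrix (Fin N) (Fin p) ℝ) (V : Matrix (Fin p) (Fin p) ℝ),
      Uᵀ * U = 1 ∧ Vᵀ * V = 1 ∧ Good N p k B Y U V} := by
  set K1 := {U : Matrix (Fin N) (Fin p) ℝ | Uᵀ * U = 1}
  set K2 := {U : Matrix (Fin p) (Fin p) ℝ | Uᵀ * U = 1}
  have c1 : CompactSpace K1 := isCompact_iff_compactSpace.mp (orth_compact N p)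
  have c2 : CompactSpace K2 := isCompact_iff_compactSpace.mp (orth_compact p p)
  have hS : IsClosed {z : Matrix (Fin N) (Fin p) ℝ × (K1 × K2) | Good N p k B z.1 z.2.1 z.2.2} := by
    have cY : Continuous fun z : Matrix (Fin N) (Fin p) ℝ × (K1 × K2) => z.1 := continuous_fst
    have cU : Continuous fun z : Matrix (Fin N) (Fin p) ℝ × (K1 × K2) => (z.2.1 : Matrix (Fin N) (Fin p) ℝ) :=
      continuous_subtype_val.comp (continuous_fst.comp continuous_snd)
    have cV : Continuous fun z : Matrix (Fin N) (Fin p) ℝ × (K1 × K2) => (z.2.2 : Matrix (Fin p) (Fin p) ℝ) :=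
      continuous_subtype_val.comp (continuous_snd.comp continuous_snd)
    have cD := (cU.matrix_transpose.matrix_mul cY).matrix_mul cV
    have cd := cD.matrix_diag
    have cdi : ∀ i, Continuous fun z : Matrix (Fin N) (Fin p) ℝ × (K1 × K2) =>
        ((z.2.1 : Matrix (Fin N) (Fin p) ℝ)ᵀ * z.1 * (z.2.2 : Matrix (Fin p) (Fin p) ℝ)).diag i :=
      fun i => continuous_pi_iff.mp cd i
    simp only [Good, Set.ofPred_and]
    refine (isClosed_eq cD cd.matrix_diagonal).inter (IsClosed.inter (isClosed_eq cY
      ((cU.matrix_mul cD).matrix_mul cV.matrix_transpose)) (IsClosed.inter ?_ (IsClosed.inter ?_ ?_)))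
    · simp only [Antitone, Set.ofPred_forall]
      exact isClosed_iInter fun i => isClosed_iInter fun j => isClosed_iInter fun _ =>
        isClosed_le (cdi j) (cdi i)
    · simp only [Set.ofPred_forall]
      exact isClosed_iInter fun i => isClosed_le continuous_const (cdi i)
    · exact isClosed_eq ((((cU.matrix_mul continuous_const).matrix_mul cU.matrix_transpose).matrix_mul
        continuous_const).matrix_mul ((cV.matrix_mul continuous_const).matrix_mul cV.matrix_transpose))
        continuous_const
  have := isClosedMap_fst_of_compactSpace _ hS
  convert this using 1
  ext Y
  constructor
  · rintro ⟨U, V, hU, hV, hg⟩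
    exact ⟨(Y, ⟨U, hU⟩, ⟨V, hV⟩), hg, rfl⟩
  · rintro ⟨⟨Y', ⟨U, hU⟩, ⟨V, hV⟩⟩, hg, rfl⟩
    exact ⟨U, V, hU, hV, hg⟩

lemma good_entry (N p k : ℕ) (hp : k < p) (hNp : p ≤ N) (B : Matrix (Fin N) (Fin p) ℝ)
    (hall : ∀ Y, ∃ (U : Matrix (Fin N) (Fin p) ℝ) (V : Matrix (Fin p) (Fin p) ℝ),
      Uᵀ * U = 1 ∧ Vᵀ * V = 1 ∧ Good N p k B Y U V) (a : Fin N) (b : Fin p) : B a b = 0 := by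
  set ι : Fin p → Fin N := fun j => Equiv.swap (Fin.castLE hNp b) a (Fin.castLE hNp j) with hι
  have hinj : Function.Injective ι := (Equiv.injective _).comp (Fin.castLE_injective hNp)
  have hιb : ι b = a := by simp [hι]
  set Y : Matrix (Fin N) (Fin p) ℝ := Matrix.of fun i j => if i = ι j then (if j = b then 1 else 2) else 0 with hY
  set w : Fin p → ℝ := fun j => if j = b then 1 else 4 with hw
  have hYY : Yᵀ * Y = Matrix.diagonal w := by
    ext i j
    rw [Matrix.mul_apply, Finset.sum_eq_single (ι i)]
    · by_cases hij : i = j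
      · subst hij
        simp only [hY, hw, Matrix.transpose_apply, Matrix.of_apply, Matrix.diagonal_apply_eq, if_true]
        split_ifs <;> norm_num
      · rw [Matrix.diagonal_apply_ne _ hij]
        simp [hY, hinj.eq_iff, hij]
    · intro l _ hl
      simp [hY, hl]
    · simp
  obtain ⟨U, V, hU, hV, hD, hS, hanti, hnn, hnull⟩ := hall Y
  set d := (Uᵀ * Y * V).diag with hd
  rw [hD] at hS
  have hV' : V * Vᵀ = 1 := mul_eq_one_comm.mp hV
  have hW := svd_pow Y U V d hS hU hV 1
  rw [pow_one, hYY] at hW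
  have htr := svd_trace Y U V d hS hU hV 1
  rw [pow_one, hYY, Matrix.trace_diagonal] at htr
  simp only [mul_one] at hW htr
  set l : Fin p := ⟨p - 1, by omega⟩ with hl
  have hWV : Matrix.diagonal w * V = V * Matrix.diagonal (fun i => d i ^ 2) := by
    rw [hW, Matrix.mul_assoc, hV, Matrix.mul_one]
  have hent : ∀ i j, w i * V i j = V i j * d j ^ 2 := by
    intro i j
    have := congrFun (congrFun hWV i) j
    rwa [Matrix.diagonal_mul, Matrix.mul_diagonal] at this
  have hd4 : d l ^ 2 ≠ 4 := by
    intro h4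
    have h5 : ∀ j, 4 ≤ d j ^ 2 := by
      intro j
      rw [← h4]
      exact pow_le_pow_left₀ (hnn l) (hanti (Fin.le_def.mpr (by simp only [hl]; omega))) 2
    have h6 : ∑ j, w j < ∑ j : Fin p, (4:ℝ) := by
      refine Finset.sum_lt_sum (fun j _ => ?_) ⟨b, Finset.mem_univ b, ?_⟩
      · simp only [hw]; split_ifs <;> norm_num
      · simp only [hw, if_true]; norm_num
    have h7 : ∑ j : Fin p, (4:ℝ) ≤ ∑ j, d j ^ 2 := Finset.sum_le_sum fun j _ => h5 j
    linarith
  have hV0 : ∀ i, i ≠ b → V i l = 0 := by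
    intro i hi
    have h := hent i l
    simp only [hw, if_neg hi] at h
    have h8 : V i l * (4 - d l ^ 2) = 0 := by linarith
    exact (mul_eq_zero.mp h8).resolve_right (sub_ne_zero.mpr (Ne.symm hd4))
  have hVb : V b l * V b l = 1 := by
    have h := congrFun (congrFun hV l) l
    rw [Matrix.mul_apply, Finset.sum_eq_single b, Matrix.one_apply_eq] at h
    · exact h
    · intro i _ hi; rw [Matrix.transpose_apply, hV0 i hi, zero_mul]
    · simp
  have hdl : d l = 1 := by
    have h := hent b l
    simp only [hw, if_true, one_mul] at h
    have hne : V b l ≠ 0 := by intro h0; rw [h0] at hVb; simp at hVb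
    have h9 : d l ^ 2 = 1 := by
      have : V b l * d l ^ 2 = V b l * 1 := by linarith
      exact mul_left_cancel₀ hne this
    have := hnn l
    nlinarith
  have hUD : Y * V = U * Matrix.diagonal d := by
    rw [hS, Matrix.mul_assoc _ Vᵀ V, hV, Matrix.mul_one]
  have hUl : ∀ i, U i l = if i = a then V b l else 0 := by
    intro i
    have h := congrFun (congrFun hUD i) l
    rw [Matrix.mul_diagonal, hdl, mul_one, Matrix.mul_apply, Finset.sum_eq_single b] at h
    · rw [← h]; simp [hY, hιb]
    · intro j _ hj; rw [hV0 j hj, mul_zero]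
    · simp
  have hM : Mk p k * (Uᵀ * B * V) * Mk p k = 0 := by
    calc Mk p k * (Uᵀ * B * V) * Mk p k
        = (Uᵀ * U) * Mk p k * Uᵀ * B * V * Mk p k * (Vᵀ * V) := by
          rw [hU, hV]; simp only [Matrix.mul_assoc, Matrix.one_mul, Matrix.mul_one]
      _ = Uᵀ * (U * Mk p k * Uᵀ * B * (V * Mk p k * Vᵀ)) * V := by simp only [Matrix.mul_assoc]
      _ = 0 := by rw [hnull]; simp
  have hfin := congrFun (congrFun hM l) l
  rw [Mk, Matrix.mul_diagonal, Matrix.diagonal_mul] at hfin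
  have hkl : k ≤ (l : ℕ) := by simp only [hl]; omega
  simp only [hkl, if_true, one_mul, mul_one, Matrix.zero_apply] at hfin
  rw [Matrix.mul_apply, Finset.sum_eq_single b, Matrix.mul_apply, Finset.sum_eq_single a] at hfin
  · rw [Matrix.transpose_apply, hUl, if_pos rfl] at hfin
    have : V b l * B a b * V b l = B a b := by
      calc _ = (V b l * V b l) * B a b := by ring
        _ = _ := by rw [hVb, one_mul]
    rw [← this, hfin]
  · intro i _ hi; rw [Matrix.transpose_apply, hUl, if_neg hi, zero_mul]
  · simp
  · intro j _ hj; rw [hV0 j hj, mul_zero]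
  · simp

lemma B_zero
    (N p : ℕ) (hNp : p < N) (v : NNReal) (hv : v ≠ 0)
    (B : Matrix (Fin N) (Fin p) ℝ) (k : ℕ) (hk : k + 1 < p)
    {Ω : Type} [MeasurableSpace Ω] (P : Measure Ω)
    (Y U : Ω → Fin N → Fin p → ℝ) (V : Ω → Fin p → Fin p → ℝ) (d : Ω → Fin p → ℝ)
    (hYm : Measurable Y)
    (hlaw : Measure.map Y P =
      Measure.pi (fun i : Fin N => Measure.pi (fun j : Fin p => gaussianReal (B i j) v)))
    (hSVD : ∀ ω, Matrix.of (Y ω) =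
      Matrix.of (U ω) * Matrix.diagonal (d ω) * (Matrix.of (V ω))ᵀ)
    (hUorth : ∀ ω, (Matrix.of (U ω))ᵀ * Matrix.of (U ω) = 1)
    (hVorth : ∀ ω, (Matrix.of (V ω))ᵀ * Matrix.of (V ω) = 1)
    (hanti : ∀ ω, Antitone (d ω))
    (hnonneg : ∀ ω i, 0 ≤ d ω i)
    (hnull : ∀ᵐ ω ∂P,
      (Matrix.of (U ω) * Matrix.diagonal (fun j : Fin p => if k ≤ (j : ℕ) then (1:ℝ) else 0) *
          (Matrix.of (U ω))ᵀ) * B *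
        (Matrix.of (V ω) * Matrix.diagonal (fun j : Fin p => if k ≤ (j : ℕ) then (1:ℝ) else 0) *
          (Matrix.of (V ω))ᵀ) = 0) : ∀ a b, B a b = 0 := by
  refine good_entry N p k (by omega) hNp.le B ?_
  set T := {Y : Matrix (Fin N) (Fin p) ℝ | ∃ (U : Matrix (Fin N) (Fin p) ℝ) (V : Matrix (Fin p) (Fin p) ℝ),
      Uᵀ * U = 1 ∧ Vᵀ * V = 1 ∧ Good N p k B Y U V} with hT
  have hTc : IsClosed T := good_closed N p k B
  set T' : Set (Fin N → Fin p → ℝ) := {y | Matrix.of y ∈ T} with hT'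
  have hTc' : IsClosed T' := hTc
  have hopen : (Measure.map Y P).IsOpenPosMeasure := by
    rw [hlaw]
    have : ∀ i j, (gaussianReal (B i j) v).IsOpenPosMeasure := fun i j =>
      (gaussianReal_absolutelyContinuous' (B i j) hv).isOpenPosMeasure
    have h2 : ∀ i, (Measure.pi (fun j : Fin p => gaussianReal (B i j) v)).IsOpenPosMeasure :=
      fun i => Measure.pi.isOpenPosMeasure _
    have h3 : ∀ i, IsProbabilityMeasure (Measure.pi (fun j : Fin p => gaussianReal (B i j) v)) :=
      fun i => inferInstance
    have h4 : ∀ i, SigmaFinite (Measure.pi (fun j : Fin p => gaussianReal (B i j) v)) :=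
      fun i => IsFiniteMeasure.toSigmaFinite _
    exact Measure.pi.isOpenPosMeasure _
  have hmem : ∀ᵐ ω ∂P, Y ω ∈ T' := by
    filter_upwards [hnull] with ω hω
    have hD : (Matrix.of (U ω))ᵀ * Matrix.of (Y ω) * Matrix.of (V ω) = Matrix.diagonal (d ω) := by
      rw [hSVD ω]
      calc _ = ((Matrix.of (U ω))ᵀ * Matrix.of (U ω)) * Matrix.diagonal (d ω) *
            ((Matrix.of (V ω))ᵀ * Matrix.of (V ω)) := by simp only [Matrix.mul_assoc]
        _ = _ := by rw [hUorth, hVorth, Matrix.one_mul, Matrix.mul_one]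
    refine ⟨Matrix.of (U ω), Matrix.of (V ω), hUorth ω, hVorth ω, ?_⟩
    unfold Good
    rw [hD, Matrix.diag_diagonal]
    exact ⟨rfl, hSVD ω, hanti ω, hnonneg ω, hω⟩
  have hzero : Measure.map Y P T'ᶜ = 0 := by
    rw [Measure.map_apply hYm hTc'.measurableSet.compl]
    exact hmem
  have hemp : T'ᶜ = ∅ := hTc'.isOpen_compl.eq_empty_of_measure_zero hzero
  intro y
  have : (Matrix.of.symm y : Fin N → Fin p → ℝ) ∈ T' := by
    by_contra h
    have : (Matrix.of.symm y : Fin N → Fin p → ℝ) ∈ T'ᶜ := h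
    rw [hemp] at this
    exact this
  exact this

end Icsv

namespace Icsv
open Filter Topology

lemma surv_cont (g : ℝ → ℝ) (hg : Integrable g) : Continuous fun t => ∫ y in Set.Ioi t, g y := by
  have h : (fun t => ∫ y in Set.Ioi t, g y) = fun t => (∫ y in Set.Ioi 0, g y) - ∫ y in (0:ℝ)..t, g y := by
    ext t
    rw [← intervalIntegral.integral_Ioi_sub_Ioi' hg.integrableOn hg.integrableOn]
    ring
  rw [h]
  exact continuous_const.sub (intervalIntegral.continuous_primitive (fun a b => hg.intervalIntegrable) 0)

/-- Probability integral transform for an integrable density. -/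
lemma pit (g : ℝ → ℝ) (hg : Integrable g) (h0 : ∀ y, 0 ≤ g y) (A : Set ℝ) (hA : MeasurableSet A) :
    ∫⁻ t, A.indicator 1 ((∫ y in Set.Ioi t, g y) / ∫ y, g y) * ENNReal.ofReal (g t)
      = ENNReal.ofReal (∫ y, g y) * volume.restrict (Set.Ioo (0:ℝ) 1) A := by
  set G := ∫ y, g y with hG
  have hG0 : 0 ≤ G := integral_nonneg h0
  have hlG : ∫⁻ t, ENNReal.ofReal (g t) = ENNReal.ofReal G :=
    (ofReal_integral_eq_lintegral_ofReal hg (Eventually.of_forall h0)).symm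
  rcases hG0.eq_or_lt with hz | hpos
  · rw [← hz, ENNReal.ofReal_zero, zero_mul]
    rw [← hz, ENNReal.ofReal_zero] at hlG
    refine le_antisymm ?_ zero_le
    rw [← hlG]
    refine lintegral_mono fun t => ?_
    refine (mul_le_mul_left (b := A.indicator 1 _) (c := 1) ?_ _).trans (one_mul _).le
    exact Set.indicator_le_self' (fun _ _ => zero_le) _
  set S : ℝ → ℝ := fun t => (∫ y in Set.Ioi t, g y) / G with hS
  have hSc : Continuous S := (surv_cont g hg).div_const G
  have hSa : Antitone S := by
    intro s t hst
    refine div_le_div_of_nonneg_right ?_ hG0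
    exact setIntegral_mono_set hg.integrableOn (Eventually.of_forall h0)
      (Eventually.of_forall fun x hx => lt_of_le_of_lt hst hx)
  have hS0 : ∀ t, 0 ≤ S t := fun t => div_nonneg (integral_nonneg h0) hG0
  have hS1 : ∀ t, S t ≤ 1 := by
    intro t
    rw [hS, div_le_one hpos]
    exact setIntegral_le_integral hg (Eventually.of_forall h0)
  have hbot : Tendsto S atBot (𝓝 1) := by
    have h1 := (aecover_Ioi (μ := (volume : Measure ℝ)) (tendsto_id (α := ℝ) (x := atBot))).integral_tendsto_of_countably_generated hg
    have h2 := h1.div_const G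
    rw [div_self hpos.ne'] at h2
    exact h2
  have htop : Tendsto S atTop (𝓝 0) := by
    have h1 := (aecover_Iic (μ := (volume : Measure ℝ)) (tendsto_id (α := ℝ) (x := atTop))).integral_tendsto_of_countably_generated hg
    have h2 := ((tendsto_const_nhds (x := G)).sub h1).div_const G
    rw [sub_self, zero_div] at h2
    refine h2.congr fun t => ?_
    simp only [hS, id]
    congr 1
    rw [hG, ← setIntegral_univ, ← Set.Iic_union_Ioi (a := t), setIntegral_union (Set.Iic_disjoint_Ioi le_rfl) measurableSet_Ioi
      hg.integrableOn hg.integrableOn]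
    ring
  -- the normalized measures
  set μ : Measure ℝ := volume.withDensity fun t => ENNReal.ofReal (g t) with hμ
  have hμfin : IsFiniteMeasure μ := isFiniteMeasure_withDensity_ofReal hg.hasFiniteIntegral
  have hμuniv : μ Set.univ = ENNReal.ofReal G := by
    rw [hμ, withDensity_apply _ MeasurableSet.univ, Measure.restrict_univ, hlG]
  have hμIci : ∀ t, μ (Set.Ici t) = ENNReal.ofReal (G * S t) := by
    intro t
    rw [hμ, withDensity_apply _ measurableSet_Ici, ← restrict_Ioi_eq_restrict_Ici,
      ← ofReal_integral_eq_lintegral_ofReal hg.integrableOn (Eventually.of_forall h0)]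
    congr 1
    simp only [hS]; field_simp
  have key : Measure.map S μ = ENNReal.ofReal G • volume.restrict (Set.Ioo (0:ℝ) 1) := by
    have : IsFiniteMeasure (ENNReal.ofReal G • volume.restrict (Set.Ioo (0:ℝ) 1)) :=
      Measure.smul_finite _ ENNReal.ofReal_ne_top
    refine Measure.ext_of_Iic _ _ fun u => ?_
    rw [Measure.map_apply hSc.measurable measurableSet_Iic, Measure.smul_apply, smul_eq_mul,
      Measure.restrict_apply measurableSet_Iic]
    rcases lt_or_ge u 0 with hu | hu
    · have e1 : S ⁻¹' Set.Iic u = ∅ := by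
        ext t; simp only [Set.mem_preimage, Set.mem_Iic, Set.mem_empty_iff_false, iff_false, not_le]
        exact lt_of_lt_of_le hu (hS0 t)
      have e2 : Set.Iic u ∩ Set.Ioo 0 1 = ∅ := by
        ext t; simp only [Set.mem_inter_iff, Set.mem_Iic, Set.mem_Ioo, Set.mem_empty_iff_false, iff_false]
        rintro ⟨h1, h2, _⟩; linarith
      simp [e1, e2]
    rcases le_or_gt 1 u with hu1 | hu1
    · have e1 : S ⁻¹' Set.Iic u = Set.univ := by
        ext t; simp only [Set.mem_preimage, Set.mem_Iic, Set.mem_univ, iff_true]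
        exact (hS1 t).trans hu1
      have e2 : Set.Iic u ∩ Set.Ioo 0 1 = Set.Ioo 0 1 := by
        ext t; simp only [Set.mem_inter_iff, Set.mem_Iic, Set.mem_Ioo, and_iff_right_iff_imp]
        rintro ⟨h1, h2⟩; linarith
      rw [e1, e2, hμuniv]; simp
    have e2 : volume (Set.Iic u ∩ Set.Ioo 0 1) = ENNReal.ofReal u := by
      have : Set.Iic u ∩ Set.Ioo 0 1 = Set.Ioc 0 u := by
        ext t; simp only [Set.mem_inter_iff, Set.mem_Iic, Set.mem_Ioo, Set.mem_Ioc]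
        constructor
        · rintro ⟨h1, h2, _⟩; exact ⟨h2, h1⟩
        · rintro ⟨h1, h2⟩; exact ⟨h2, h1, by linarith⟩
      rw [this, Real.volume_Ioc, sub_zero]
    rw [e2, ← ENNReal.ofReal_mul hG0]
    by_cases hne : (S ⁻¹' Set.Iic u).Nonempty
    · obtain ⟨s0, hs0⟩ := (hbot.eventually (lt_mem_nhds hu1)).exists_forall_of_atBot
      have hbdd : BddBelow (S ⁻¹' Set.Iic u) := ⟨s0, fun t ht => by
        by_contra hcon
        exact absurd (Set.mem_Iic.mp ht) (not_le.mpr (hs0 t (not_le.mp hcon).le))⟩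
      have hcl : IsClosed (S ⁻¹' Set.Iic u) := isClosed_Iic.preimage hSc
      set t0 := sInf (S ⁻¹' Set.Iic u)
      have ht0 : S t0 ≤ u := hcl.csInf_mem hne hbdd
      have hpre : S ⁻¹' Set.Iic u = Set.Ici t0 := by
        ext t
        exact ⟨fun ht => csInf_le hbdd ht, fun ht => (hSa ht).trans ht0⟩
      have ht0' : u ≤ S t0 := by
        refine ge_of_tendsto (hSc.continuousAt.tendsto.mono_left (nhdsWithin_le_nhds (s := Set.Iio t0)) : Tendsto S (𝓝[<] t0) (𝓝 (S t0))) ?_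
        filter_upwards [self_mem_nhdsWithin] with t ht
        by_contra hcon
        have : t ∈ S ⁻¹' Set.Iic u := (not_le.mp hcon).le
        rw [hpre] at this
        exact absurd (Set.mem_Iio.mp ht) (not_lt.mpr this)
      rw [hpre, hμIci, le_antisymm ht0 ht0']
    · rw [Set.not_nonempty_iff_eq_empty] at hne
      have hu0 : u = 0 := by
        by_contra hcon
        have hup : 0 < u := lt_of_le_of_ne hu (Ne.symm hcon)
        obtain ⟨t, ht⟩ := (htop.eventually (gt_mem_nhds hup)).exists
        have : t ∈ S ⁻¹' Set.Iic u := ht.le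
        rw [hne] at this
        exact this
      rw [hne, hu0]; simp
  have hfin := congrArg (fun m => m A) key
  simp only [Measure.smul_apply, smul_eq_mul] at hfin
  rw [← hfin, Measure.map_apply hSc.measurable hA, hμ, withDensity_apply _ (hSc.measurable hA),
    ← lintegral_indicator (hSc.measurable hA)]
  refine lintegral_congr fun t => ?_
  by_cases ht : S t ∈ A
  · rw [Set.indicator_of_mem (show (∫ y in Set.Ioi t, g y) / G ∈ A from ht), Set.indicator_of_mem (show t ∈ S ⁻¹' A from ht)]; simp
  · rw [Set.indicator_of_notMem (show (∫ y in Set.Ioi t, g y) / G ∉ A from ht), Set.indicator_of_notMem (show t ∉ S ⁻¹' A from ht)]; simp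

end Icsv

namespace Icsv
open MvPolynomial

/-- The region of the trailing singular values. -/
def Reg (k q : ℕ) (a : Fin k → ℝ) : Set (Fin (q + 1) → ℝ) :=
  {v | Antitone v ∧ 0 ≤ v (Fin.last q) ∧ ∀ i : Fin k, v 0 ≤ a i}

/-- The integrand of `g`. -/
noncomputable def Ig (σ : ℝ) (M k q : ℕ) (a : Fin k → ℝ) (v : Fin (q + 1) → ℝ) : ℝ :=
  (∏ i : Fin (q + 1), Real.exp (-(v i) ^ 2 / (2 * σ ^ 2)) * v i ^ M) *
        (∏ i : Fin (q + 1), ∏ j ∈ Finset.Ioi i, (v i ^ 2 - v j ^ 2)) *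
        (∏ i : Fin k, ∏ j : Fin (q + 1), (a i ^ 2 - v j ^ 2)) *
        Set.indicator (Reg k q a) (fun _ => (1 : ℝ)) v

lemma reg_cone {k q : ℕ} {a : Fin k → ℝ} {v : Fin (q + 1) → ℝ} (h : v ∈ Reg k q a) : v ∈ Cone (q + 1) :=
  ⟨h.1, fun i => h.2.1.trans (h.1 (Fin.le_last i))⟩

lemma reg_closed (k q : ℕ) :
    IsClosed {z : (Fin k → ℝ) × (Fin (q + 1) → ℝ) | z.2 ∈ Reg k q z.1} := by
  have : {z : (Fin k → ℝ) × (Fin (q + 1) → ℝ) | z.2 ∈ Reg k q z.1} =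
      (⋂ i, ⋂ j, ⋂ (_ : i ≤ j), {z : (Fin k → ℝ) × (Fin (q + 1) → ℝ) | z.2 j ≤ z.2 i}) ∩
        ({z | 0 ≤ z.2 (Fin.last q)} ∩ ⋂ i, {z | z.2 0 ≤ z.1 i}) := by
    ext x
    simp [Reg, Antitone]
  rw [this]
  refine IsClosed.inter ?_ (IsClosed.inter ?_ ?_)
  · exact isClosed_iInter fun i => isClosed_iInter fun j => isClosed_iInter fun _ =>
      isClosed_le (by fun_prop) (by fun_prop)
  · exact isClosed_le (by fun_prop) (by fun_prop)
  · exact isClosed_iInter fun i => isClosed_le (by fun_prop) (by fun_prop)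

lemma Ig_nonneg (σ : ℝ) (M k q : ℕ) (a : Fin k → ℝ) (v : Fin (q + 1) → ℝ) : 0 ≤ Ig σ M k q a v := by
  unfold Ig
  by_cases hv : v ∈ Reg k q a
  · have hc := reg_cone hv
    refine mul_nonneg (mul_nonneg (mul_nonneg ?_ ?_) ?_) (Set.indicator_nonneg (fun _ _ => zero_le_one) _)
    · exact Finset.prod_nonneg fun i _ => mul_nonneg (Real.exp_pos _).le (pow_nonneg (hc.2 i) _)
    · refine Finset.prod_nonneg fun i _ => Finset.prod_nonneg fun j hj => ?_
      exact sub_nonneg.mpr (pow_le_pow_left₀ (hc.2 j) (hc.1 (Finset.mem_Ioi.mp hj).le) 2)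
    · refine Finset.prod_nonneg fun i _ => Finset.prod_nonneg fun j hj => ?_
      exact sub_nonneg.mpr (pow_le_pow_left₀ (hc.2 j) ((hc.1 (Fin.zero_le j)).trans (hv.2.2 i)) 2)
  · rw [Set.indicator_of_notMem hv, mul_zero]

lemma Ig_meas (σ : ℝ) (M k q : ℕ) :
    Measurable fun z : (Fin k → ℝ) × (Fin (q + 1) → ℝ) => Ig σ M k q z.1 z.2 := by
  unfold Ig
  refine Measurable.mul (Continuous.measurable (by fun_prop)) ?_
  have : (fun z : (Fin k → ℝ) × (Fin (q + 1) → ℝ) => (Reg k q z.1).indicator (fun _ => (1:ℝ)) z.2) =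
      Set.indicator {z : (Fin k → ℝ) × (Fin (q + 1) → ℝ) | z.2 ∈ Reg k q z.1} (fun _ => 1) := by
    ext z; rfl
  rw [this]
  exact measurable_const.indicator (reg_closed k q).measurableSet

lemma exp_gw (σ : ℝ) (n : ℕ) (v : Fin n → ℝ) :
    ∏ i, Real.exp (-(v i) ^ 2 / (2 * σ ^ 2)) = gw (1 / (2 * σ ^ 2)) v := by
  rw [gw_eq_prod]
  refine Finset.prod_congr rfl fun i _ => ?_
  congr 1; ring

lemma Ig_int (σ : ℝ) (hσ : 0 < σ) (M k q : ℕ) (a : Fin k → ℝ) : Integrable (Ig σ M k q a) := by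
  have h1 := int_poly_gauss (1 / (2 * σ ^ 2)) (by positivity)
    (Jp M (q + 1) * ∏ i : Fin k, ∏ j : Fin (q + 1), (C (a i ^ 2) - X j ^ 2))
  have hm : MeasurableSet (Reg k q a) :=
    measurable_prodMk_left (reg_closed k q).measurableSet
  refine (h1.indicator hm).congr (Filter.Eventually.of_forall fun v => ?_)
  simp only [Set.indicator, Ig]
  split_ifs
  · rw [map_mul, eval_Jp, Finset.prod_mul_distrib, exp_gw]
    simp only [map_prod, map_sub, map_pow, eval_C, eval_X]
    ring
  · simp

lemma prod_Ioi (n : ℕ) (F : Fin n → Fin n → ℝ) :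
    ∏ i, ∏ j ∈ Finset.Ioi i, F i j = ∏ i, ∏ j, if i < j then F i j else 1 := by
  refine Finset.prod_congr rfl fun i _ => ?_
  rw [← Finset.prod_filter]
  refine Finset.prod_congr ?_ fun _ _ => rfl
  ext j; simp

lemma cone_append (k q : ℕ) (a : Fin k → ℝ) (v : Fin (q + 1) → ℝ) :
    Fin.append a v ∈ Cone (k + (q + 1)) ↔ a ∈ Cone k ∧ v ∈ Reg k q a := by
  constructor
  · intro h
    refine ⟨⟨fun i j hij => ?_, fun i => ?_⟩, fun i j hij => ?_, ?_, fun i => ?_⟩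
    · simpa using h.1 (show Fin.castAdd (q+1) i ≤ Fin.castAdd (q+1) j from hij)
    · simpa using h.2 (Fin.castAdd (q+1) i)
    · simpa using h.1 (show Fin.natAdd k i ≤ Fin.natAdd k j by simpa using hij)
    · have := h.2 (Fin.natAdd k (Fin.last q))
      rwa [Fin.append_right] at this
    · simpa using h.1 (show Fin.castAdd (q+1) i ≤ Fin.natAdd k 0 by
        rw [Fin.le_def]; simp)
  · rintro ⟨h1, h2⟩
    have h3 := reg_cone h2
    refine ⟨fun i j hij => ?_, fun i => ?_⟩
    · induction i using Fin.addCases with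
      | left i =>
        induction j using Fin.addCases with
        | left j => simpa using h1.1 (show i ≤ j from hij)
        | right j => simpa using (h3.1 (Fin.zero_le j)).trans (h2.2.2 i)
      | right i =>
        induction j using Fin.addCases with
        | left j =>
          exfalso
          rw [Fin.le_def] at hij
          simp at hij; omega
        | right j => simpa using h3.1 (show i ≤ j by simpa using hij)
    · induction i using Fin.addCases with
      | left i => simpa using h1.2 i
      | right i => simpa using h3.2 i

lemma factor (σ : ℝ) (M k q : ℕ) (a : Fin k → ℝ) (v : Fin (q + 1) → ℝ) :
    rC M (k + (q + 1)) 0 (Fin.append a v) * gw (1 / (2 * σ ^ 2)) (Fin.append a v)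
      = (rC M k 0 a * gw (1 / (2 * σ ^ 2)) a) * Ig σ M k q a v := by
  unfold rC Ig
  simp only [add_zero, Real.rpow_one]
  by_cases ha : a ∈ Cone k
  · by_cases hv : v ∈ Reg k q a
    · rw [Set.indicator_of_mem ((cone_append k q a v).mpr ⟨ha, hv⟩), Set.indicator_of_mem ha,
        Set.indicator_of_mem hv, eval_Jp, eval_Jp, Finset.prod_mul_distrib, exp_gw]
      have hgw : gw (1 / (2 * σ ^ 2)) (Fin.append a v) = gw (1 / (2 * σ ^ 2)) a * gw (1 / (2 * σ ^ 2)) v := by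
        simp only [gw_eq_prod, Fin.prod_univ_add, Fin.append_left, Fin.append_right]
      have hv : ∏ i, ∏ j ∈ Finset.Ioi i, (Fin.append a v i ^ 2 - Fin.append a v j ^ 2)
          = (∏ i, ∏ j ∈ Finset.Ioi i, (a i ^ 2 - a j ^ 2)) *
            (∏ i : Fin k, ∏ j : Fin (q + 1), (a i ^ 2 - v j ^ 2)) *
            (∏ i, ∏ j ∈ Finset.Ioi i, (v i ^ 2 - v j ^ 2)) := by
        simp only [prod_Ioi, Fin.prod_univ_add, Fin.append_left, Fin.append_right]
        have e1 : ∀ (i : Fin k) (j : Fin (q+1)), Fin.castAdd (q+1) i < Fin.natAdd k j := by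
          intro i j; rw [Fin.lt_def]; simp; omega
        have e2 : ∀ (i : Fin k) (j : Fin (q+1)), ¬ Fin.natAdd k j < Fin.castAdd (q+1) i := by
          intro i j; exact not_lt.mpr (e1 i j).le
        have e3 : ∀ (i j : Fin k), (Fin.castAdd (q+1) i < Fin.castAdd (q+1) j) ↔ i < j :=
          fun i j => Iff.rfl
        have e4 : ∀ (i j : Fin (q+1)), (Fin.natAdd k i < Fin.natAdd k j) ↔ i < j := by
          intro i j; simp
        simp only [e1, e2, e3, e4, if_true, if_false, Finset.prod_const_one, one_mul,
          Finset.prod_mul_distrib]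
      rw [hgw, hv, Fin.prod_univ_add]
      simp only [Fin.append_left, Fin.append_right]
      ring
    · rw [Set.indicator_of_notMem (fun h => hv ((cone_append k q a v).mp h).2),
        Set.indicator_of_notMem hv]; simp
  · rw [Set.indicator_of_notMem (fun h => ha ((cone_append k q a v).mp h).1),
        Set.indicator_of_notMem ha]; simp

lemma mp_append (m n : ℕ) : MeasurePreserving
    (fun z : (Fin m → ℝ) × (Fin n → ℝ) => Fin.append z.1 z.2) (volume.prod volume) volume := by
  have h1 := (volume_measurePreserving_piCongrLeft (fun _ : Fin (m + n) => ℝ) finSumFinEquiv).comp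
    (volume_measurePreserving_sumPiEquivProdPi_symm (fun _ : Fin m ⊕ Fin n => ℝ))
  have e : (fun z : (Fin m → ℝ) × (Fin n → ℝ) => Fin.append z.1 z.2) =
      ⇑(MeasurableEquiv.piCongrLeft (fun _ : Fin (m + n) => ℝ) finSumFinEquiv) ∘
        ⇑(MeasurableEquiv.sumPiEquivProdPi (fun _ : Fin m ⊕ Fin n => ℝ)).symm := by
    funext z
    funext i
    obtain ⟨j, rfl⟩ := finSumFinEquiv.surjective i
    simp only [Function.comp_apply, MeasurableEquiv.coe_piCongrLeft]
    rw [Equiv.piCongrLeft_apply_apply]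
    rcases j with j | j
    · rw [finSumFinEquiv_apply_left, Fin.append_left]; rfl
    · rw [finSumFinEquiv_apply_right, Fin.append_right]; rfl
  rw [e]
  exact h1

lemma mp_cons (n : ℕ) : MeasurePreserving
    (fun z : ℝ × (Fin n → ℝ) => (Matrix.vecCons z.1 z.2 : Fin (n + 1) → ℝ)) (volume.prod volume) volume := by
  have h1 := (volume_preserving_piFinSuccAbove (fun _ : Fin (n + 1) => ℝ) 0).symm
  have e : (fun z : ℝ × (Fin n → ℝ) => (Matrix.vecCons z.1 z.2 : Fin (n + 1) → ℝ)) =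
      ⇑(MeasurableEquiv.piFinSuccAbove (fun _ : Fin (n + 1) => ℝ) 0).symm := by
    funext z
    funext i
    simp [MeasurableEquiv.piFinSuccAbove, Matrix.vecCons, Fin.insertNthEquiv]
  rw [e]
  exact h1

lemma Ig_zero (σ : ℝ) (M k q : ℕ) (a : Fin k → ℝ) (v : Fin (q + 1) → ℝ) (h : v ∉ Reg k q a) :
    Ig σ M k q a v = 0 := by
  simp [Ig, Set.indicator_of_notMem h]

attribute [irreducible] Ig

end Icsv

namespace Icsv

/-- The function `g` of the paper. -/
noncomputable def gg (σ : ℝ) (M k q : ℕ) (a : Fin k → ℝ) (y : ℝ) : ℝ :=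
  ∫ w : Fin q → ℝ, Ig σ M k q a (Matrix.vecCons y w)

/-- The conditional survival function. -/
noncomputable def HH (σ : ℝ) (M k q : ℕ) (a : Fin k → ℝ) (t : ℝ) : ℝ :=
  (∫ y in Set.Ioi t, gg σ M k q a y) / ∫ y, gg σ M k q a y

lemma gg_nonneg (σ : ℝ) (M k q : ℕ) (a : Fin k → ℝ) (y : ℝ) : 0 ≤ gg σ M k q a y :=
  integral_nonneg fun _ => Ig_nonneg _ _ _ _ _ _

lemma Ig_cons_int (σ : ℝ) (hσ : 0 < σ) (M k q : ℕ) (a : Fin k → ℝ) :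
    Integrable (fun z : ℝ × (Fin q → ℝ) => Ig σ M k q a (Matrix.vecCons z.1 z.2))
      (volume.prod volume) :=
  (mp_cons q).integrable_comp_of_integrable (Ig_int σ hσ M k q a)

lemma gg_int (σ : ℝ) (hσ : 0 < σ) (M k q : ℕ) (a : Fin k → ℝ) : Integrable (gg σ M k q a) :=
  (Ig_cons_int σ hσ M k q a).integral_prod_left

lemma gg_ae (σ : ℝ) (hσ : 0 < σ) (M k q : ℕ) (a : Fin k → ℝ) :
    ∀ᵐ y, ∫⁻ w : Fin q → ℝ, ENNReal.ofReal (Ig σ M k q a (Matrix.vecCons y w))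
      = ENNReal.ofReal (gg σ M k q a y) := by
  filter_upwards [(Ig_cons_int σ hσ M k q a).prod_right_ae] with y hy
  exact (ofReal_integral_eq_lintegral_ofReal hy
    (Filter.Eventually.of_forall fun _ => Ig_nonneg _ _ _ _ _ _)).symm

lemma gg_zero (σ : ℝ) (M k q : ℕ) (a : Fin k → ℝ) (y : ℝ) (h : y < 0 ∨ ∃ i, a i < y) :
    gg σ M k q a y = 0 := by
  unfold gg
  refine integral_eq_zero_of_ae (Filter.Eventually.of_forall fun w => ?_)
  have : Matrix.vecCons y w ∉ Reg k q a := by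
    intro hr
    rcases h with h | ⟨i, h⟩
    · have := (reg_cone hr).2 0
      simp at this; linarith
    · have := hr.2.2 i
      simp at this; linarith
  exact Ig_zero _ _ _ _ _ _ this

lemma Ig_cons_meas (σ : ℝ) (M k q : ℕ) :
    Measurable fun z : ((Fin k → ℝ) × ℝ) × (Fin q → ℝ) => Ig σ M k q z.1.1 (Matrix.vecCons z.1.2 z.2) := by
  have h1 : Measurable fun z : ((Fin k → ℝ) × ℝ) × (Fin q → ℝ) =>
      (z.1.1, (Matrix.vecCons z.1.2 z.2 : Fin (q + 1) → ℝ)) := by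
    have h0 : Measurable fun z : ((Fin k → ℝ) × ℝ) × (Fin q → ℝ) => (z.1.2, z.2) := by fun_prop
    have h2 := (mp_cons q).measurable.comp h0
    exact Measurable.prodMk (by fun_prop) h2
  exact (Ig_meas σ M k q).comp h1

lemma gg_meas (σ : ℝ) (M k q : ℕ) : Measurable fun z : (Fin k → ℝ) × ℝ => gg σ M k q z.1 z.2 := by
  have h := (Ig_cons_meas σ M k q).stronglyMeasurable.integral_prod_right' (ν := (volume : Measure (Fin q → ℝ)))
  exact h.measurable

attribute [irreducible] gg

lemma gg_meas3 (σ : ℝ) (M k q : ℕ) :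
    Measurable fun z : ((Fin k → ℝ) × ℝ) × ℝ => gg σ M k q z.1.1 z.2 := by
  have h0 : Measurable fun z : ((Fin k → ℝ) × ℝ) × ℝ => (z.1.1, z.2) := by fun_prop
  exact (gg_meas σ M k q).comp h0

lemma HH_meas (σ : ℝ) (M k q : ℕ) : Measurable fun z : (Fin k → ℝ) × ℝ => HH σ M k q z.1 z.2 := by
  unfold HH
  refine Measurable.div ?_ ?_
  · have h1 : Measurable fun z : ((Fin k → ℝ) × ℝ) × ℝ =>
        Set.indicator {z : ((Fin k → ℝ) × ℝ) × ℝ | z.1.2 < z.2} (fun z => gg σ M k q z.1.1 z.2) z := by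
      refine Measurable.indicator ?_ ?_
      · exact gg_meas3 σ M k q
      · exact measurableSet_lt (by fun_prop) (by fun_prop)
    have h2 := h1.stronglyMeasurable.integral_prod_right' (ν := (volume : Measure ℝ))
    have e : (fun z : (Fin k → ℝ) × ℝ => ∫ y in Set.Ioi z.2, gg σ M k q z.1 y) =
        fun z => ∫ y, Set.indicator {z : ((Fin k → ℝ) × ℝ) × ℝ | z.1.2 < z.2}
          (fun z => gg σ M k q z.1.1 z.2) (z, y) := by
      funext z
      rw [← integral_indicator measurableSet_Ioi]
      rfl
    rw [e]
    exact h2.measurable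
  · have h1 : Measurable fun z : ((Fin k → ℝ) × ℝ) × ℝ => gg σ M k q z.1.1 z.2 :=
      gg_meas3 σ M k q
    exact (h1.stronglyMeasurable.integral_prod_right' (ν := (volume : Measure ℝ))).measurable

attribute [irreducible] HH

lemma core (σ : ℝ) (hσ : 0 < σ) (M k q : ℕ) (c : ℝ) (hc : 0 < c)
    (μ : Measure (Fin (k + (q + 1)) → ℝ)) [IsProbabilityMeasure μ]
    (hμ : μ = volume.withDensity (fun x => ENNReal.ofReal (c * (rC M (k + (q + 1)) 0 x * gw (1 / (2 * σ ^ 2)) x)))) :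
    Measure.map (fun x => HH σ M k q (fun i => x (Fin.castAdd (q + 1) i)) (x (Fin.natAdd k 0))) μ
      = volume.restrict (Set.Ioo (0 : ℝ) 1) := by
  set T : (Fin (k + (q + 1)) → ℝ) → ℝ :=
    fun x => HH σ M k q (fun i => x (Fin.castAdd (q + 1) i)) (x (Fin.natAdd k 0)) with hT
  have hTm : Measurable T := by
    have : Measurable fun x : Fin (k + (q + 1)) → ℝ =>
        ((fun i => x (Fin.castAdd (q + 1) i) : Fin k → ℝ), x (Fin.natAdd k 0)) := by fun_prop
    exact (HH_meas σ M k q).comp this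
  set f : (Fin k → ℝ) → ℝ := fun a => c * (rC M k 0 a * gw (1 / (2 * σ ^ 2)) a) with hf
  have hf0 : ∀ a, 0 ≤ f a := by
    intro a
    refine mul_nonneg hc.le (mul_nonneg ?_ (gw_pos _ _).le)
    exact rC_nonneg M k a
  have hfm : Measurable f := ((rC_meas M k 0).mul (gw_cont _).measurable).const_mul c
  have hdens : Measurable (fun x => ENNReal.ofReal (c * (rC M (k + (q + 1)) 0 x * gw (1 / (2 * σ ^ 2)) x))) :=
    (((rC_meas M _ 0).mul (gw_cont _).measurable).const_mul c).ennreal_ofReal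
  have key : ∀ A : Set ℝ, MeasurableSet A → Measure.map T μ A =
      (∫⁻ a, ENNReal.ofReal (f a) * ENNReal.ofReal (∫ y, gg σ M k q a y)) *
        volume.restrict (Set.Ioo (0:ℝ) 1) A := by
    intro A hA
    have hind : Measurable (A.indicator (1 : ℝ → ENNReal)) := measurable_one.indicator hA
    have hF : Measurable fun x => A.indicator (1 : ℝ → ENNReal) (T x) *
        ENNReal.ofReal (c * (rC M (k + (q + 1)) 0 x * gw (1 / (2 * σ ^ 2)) x)) :=
      (hind.comp hTm).mul hdens
    have hHy : ∀ a, Measurable (HH σ M k q a) := fun a => (HH_meas σ M k q).comp measurable_prodMk_left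
    have hIgc : ∀ a, Measurable fun z : ℝ × (Fin q → ℝ) => Ig σ M k q a (Matrix.vecCons z.1 z.2) := by
      intro a
      have : Measurable fun z : ℝ × (Fin q → ℝ) => ((a, z.1), z.2) := by fun_prop
      exact (Ig_cons_meas σ M k q).comp this
    calc Measure.map T μ A = μ (T ⁻¹' A) := Measure.map_apply hTm hA
      _ = ∫⁻ x, A.indicator (1 : ℝ → ENNReal) (T x) *
            ENNReal.ofReal (c * (rC M (k + (q + 1)) 0 x * gw (1 / (2 * σ ^ 2)) x)) := by
          rw [hμ, withDensity_apply _ (hTm hA), ← lintegral_indicator (hTm hA)]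
          refine lintegral_congr fun x => ?_
          by_cases hx : T x ∈ A
          · rw [Set.indicator_of_mem hx, Set.indicator_of_mem (show x ∈ T ⁻¹' A from hx)]; simp
          · rw [Set.indicator_of_notMem hx, Set.indicator_of_notMem (show x ∉ T ⁻¹' A from hx)]; simp
      _ = ∫⁻ a, ∫⁻ v : Fin (q + 1) → ℝ, A.indicator (1 : ℝ → ENNReal) (HH σ M k q a (v 0)) *
            ENNReal.ofReal (f a * Ig σ M k q a v) := by
          have hFc := hF.comp (mp_append k (q + 1)).measurable
          simp only [Function.comp_def] at hFc
          rw [← (mp_append k (q + 1)).lintegral_comp hF, lintegral_prod _ hFc.aemeasurable]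
          refine lintegral_congr fun a => lintegral_congr fun v => ?_
          simp only [hT, Fin.append_left, Fin.append_right, factor, hf, mul_assoc]
      _ = ∫⁻ a, ENNReal.ofReal (f a) * ∫⁻ y, A.indicator 1 (HH σ M k q a y) * ENNReal.ofReal (gg σ M k q a y) := by
          refine lintegral_congr fun a => ?_
          have hIa : Measurable (Ig σ M k q a) := (Ig_meas σ M k q).comp measurable_prodMk_left
          have hm2 : Measurable fun v : Fin (q + 1) → ℝ => A.indicator (1 : ℝ → ENNReal) (HH σ M k q a (v 0)) *
            ENNReal.ofReal (Ig σ M k q a v) :=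
            (hind.comp ((hHy a).comp (measurable_pi_apply 0))).mul hIa.ennreal_ofReal
          simp only [ENNReal.ofReal_mul (hf0 a)]
          simp only [mul_left_comm _ (ENNReal.ofReal (f a)) _]
          rw [lintegral_const_mul _ hm2]
          congr 1
          have hFc := hm2.comp (mp_cons q).measurable
          simp only [Function.comp_def] at hFc
          rw [← (mp_cons q).lintegral_comp hm2, lintegral_prod _ hFc.aemeasurable]
          refine lintegral_congr_ae ?_
          filter_upwards [gg_ae σ hσ M k q a] with y hy
          have hIy : Measurable fun w : Fin q → ℝ => Ig σ M k q a (Matrix.vecCons y w) :=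
            (hIgc a).comp measurable_prodMk_left
          rw [← hy, ← lintegral_const_mul _ hIy.ennreal_ofReal]
          rfl
      _ = _ := by
          have h3 : ∀ a, ∫⁻ y, A.indicator 1 (HH σ M k q a y) * ENNReal.ofReal (gg σ M k q a y) =
              ENNReal.ofReal (∫ y, gg σ M k q a y) * volume.restrict (Set.Ioo (0:ℝ) 1) A :=
            fun a => by
              have := pit _ (gg_int σ hσ M k q a) (gg_nonneg σ M k q a) A hA
              unfold HH
              exact this
          simp only [h3, ← mul_assoc]
          rw [lintegral_mul_const]
          refine hfm.ennreal_ofReal.mul (Measurable.ennreal_ofReal ?_)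
          have h1 : Measurable fun z : (Fin k → ℝ) × ℝ => gg σ M k q z.1 z.2 := gg_meas σ M k q
          exact (h1.stronglyMeasurable.integral_prod_right' (ν := (volume : Measure ℝ))).measurable
  have hone := key Set.univ MeasurableSet.univ
  have : IsProbabilityMeasure (Measure.map T μ) := Measure.isProbabilityMeasure_map hTm.aemeasurable
  rw [measure_univ, Measure.restrict_apply_univ, Real.volume_Ioo, sub_zero, ENNReal.ofReal_one, mul_one] at hone
  ext A hA
  rw [key A hA, ← hone, one_mul]

/-- Identification of the statistic. -/
lemma stat_eq (σ : ℝ) (M k q : ℕ) (x : Fin (k + (q + 1)) → ℝ) :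
    (∫ y in {y : ℝ | x (Fin.natAdd k 0) < y ∧ ∀ j : Fin (k + (q + 1)), (j : ℕ) < k → y < x j},
        gg σ M k q (fun i => x (Fin.castAdd (q + 1) i)) y) /
      (∫ y in {y : ℝ | 0 < y ∧ ∀ j : Fin (k + (q + 1)), (j : ℕ) < k → y < x j},
        gg σ M k q (fun i => x (Fin.castAdd (q + 1) i)) y)
      = HH σ M k q (fun i => x (Fin.castAdd (q + 1) i)) (x (Fin.natAdd k 0)) := by
  set a : Fin k → ℝ := fun i => x (Fin.castAdd (q + 1) i) with ha
  have main : ∀ t : ℝ, ∫ y in {y : ℝ | t < y ∧ ∀ j : Fin (k + (q + 1)), (j : ℕ) < k → y < x j}, gg σ M k q a y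
      = ∫ y in Set.Ioi t, gg σ M k q a y := by
    intro t
    have hms : MeasurableSet {y : ℝ | t < y ∧ ∀ j : Fin (k + (q + 1)), (j : ℕ) < k → y < x j} := by
      have : {y : ℝ | t < y ∧ ∀ j : Fin (k + (q + 1)), (j : ℕ) < k → y < x j} =
          Set.Ioi t ∩ ⋂ j : Fin (k + (q + 1)), ⋂ _ : (j : ℕ) < k, Set.Iio (x j) := by
        ext y; simp
      rw [this]
      exact measurableSet_Ioi.inter (MeasurableSet.iInter fun j => MeasurableSet.iInter fun _ => measurableSet_Iio)
    rw [← integral_indicator hms, ← integral_indicator measurableSet_Ioi]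
    refine integral_congr_ae ?_
    have hae : ∀ᵐ y : ℝ, ∀ i, y ≠ x i := by
      rw [ae_all_iff]
      intro i
      exact Measure.ae_ne volume (x i)
    filter_upwards [hae] with y hy
    by_cases h1 : t < y
    · rw [Set.indicator_of_mem (show y ∈ Set.Ioi t from h1)]
      by_cases h2 : ∀ j : Fin (k + (q + 1)), (j : ℕ) < k → y < x j
      · exact Set.indicator_of_mem (show y ∈ {y : ℝ | t < y ∧ ∀ j : Fin (k + (q + 1)), (j : ℕ) < k → y < x j} from ⟨h1, h2⟩) _
      · rw [Set.indicator_of_notMem (fun h => h2 h.2)]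
        push Not at h2
        obtain ⟨j, hj, hjy⟩ := h2
        refine (gg_zero σ M k q a y (Or.inr ⟨⟨j, hj⟩, ?_⟩)).symm
        exact lt_of_le_of_ne hjy (hy j).symm
    · rw [Set.indicator_of_notMem (fun h => h1 h.1), Set.indicator_of_notMem (fun h => h1 (Set.mem_Ioi.mp h))]
  rw [main, main, HH]
  congr 1
  rw [← integral_indicator measurableSet_Ioi]
  refine integral_congr_ae ?_
  filter_upwards [Measure.ae_ne volume (0:ℝ)] with y hy
  by_cases h1 : 0 < y
  · rw [Set.indicator_of_mem (show y ∈ Set.Ioi (0:ℝ) from h1)]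
  · rw [Set.indicator_of_notMem (fun h => h1 (Set.mem_Ioi.mp h))]
    exact (gg_zero σ M k q a y (Or.inl (lt_of_le_of_ne (not_lt.mp h1) hy))).symm

end Icsv

/-- **Integrated Conditional Singular Value test (Theorem 2.2).**
Model: `Y = B + E ∈ ℝ^{N×p}` (`N > p ≥ 1`) with i.i.d. `N(0,σ²)` noise entries; `Y = U D Vᵀ`
a measurably chosen SVD with decreasing nonnegative singular values `d`.  Fix a zero-based
index `k` with `k + 1 < p` (one-based `k+1 ∈ {1,…,p-1}`).  Let
`g a y = ∫⋯∫ [∏_{i=k}^{p} e^{-y_i²/(2σ²)} y_i^{N-p}] [∏_{k≤i<j≤p}(y_i²-y_j²)]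
        [∏_{i<k} ∏_j (a_i² - y_j²)] 1{0 ≤ y_p ≤ ⋯ ≤ y_k ≤ d_{k-1}} dy_{k+1}⋯dy_p`
(`ys = vecCons y w`; upper bound `ys 0 ≤ a i` for all `i` encodes `y_k ≤ d_{k-1}`, vacuous
for `k = 0`, i.e. `d₀ = ∞`).  Under the null hypothesis
`U^{-(k)} (U^{-(k)})ᵀ B V^{-(k)} (V^{-(k)})ᵀ = 0` a.s. (mask `if k ≤ j then 1 else 0`
selecting the last `p - k` columns), the statistic
`V_{k,0} = (∫_{d_k}^{d_{k-1}} g(y; d_0,…,d_{k-1}) dy) / (∫_0^{d_{k-1}} g(y; d_0,…,d_{k-1}) dy)`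
is uniform on `(0,1)`.  The upper limit `d_{k-1}` is encoded by `∀ j < k, y < d j`. -/
theorem icsv_statistic_uniform
    (N p : ℕ) (hNp : p < N) (hp : 1 ≤ p)
    (σ : ℝ) (hσ : 0 < σ)
    (B : Matrix (Fin N) (Fin p) ℝ)
    (k : ℕ) (hk : k + 1 < p)
    {Ω : Type} [MeasurableSpace Ω] (P : Measure Ω) [IsProbabilityMeasure P]
    (Y U : Ω → Fin N → Fin p → ℝ) (V : Ω → Fin p → Fin p → ℝ) (d : Ω → Fin p → ℝ)
    (hYm : Measurable Y) (hUm : Measurable U) (hVm : Measurable V) (hdm : Measurable d)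
    (hlaw : Measure.map Y P =
      Measure.pi (fun i : Fin N => Measure.pi (fun j : Fin p =>
        gaussianReal (B i j) ⟨σ ^ 2, sq_nonneg σ⟩)))
    (hSVD : ∀ ω, Matrix.of (Y ω) =
      Matrix.of (U ω) * Matrix.diagonal (d ω) * (Matrix.of (V ω))ᵀ)
    (hUorth : ∀ ω, (Matrix.of (U ω))ᵀ * Matrix.of (U ω) = 1)
    (hVorth : ∀ ω, (Matrix.of (V ω))ᵀ * Matrix.of (V ω) = 1)
    (hanti : ∀ ω, Antitone (d ω))
    (hnonneg : ∀ ω i, 0 ≤ d ω i)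
    (hnull : ∀ᵐ ω ∂P,
      (Matrix.of (U ω) * Matrix.diagonal (fun j : Fin p => if k ≤ (j : ℕ) then (1:ℝ) else 0) *
          (Matrix.of (U ω))ᵀ) * B *
        (Matrix.of (V ω) * Matrix.diagonal (fun j : Fin p => if k ≤ (j : ℕ) then (1:ℝ) else 0) *
          (Matrix.of (V ω))ᵀ) = 0)
    (g : (Fin k → ℝ) → ℝ → ℝ)
    (hg : ∀ (a : Fin k → ℝ) (y : ℝ), g a y =
      ∫ w : Fin (p - k - 1) → ℝ,
        (∏ i : Fin (p - k - 1 + 1),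
            Real.exp (-(Matrix.vecCons y w i) ^ 2 / (2 * σ ^ 2)) *
              Matrix.vecCons y w i ^ (N - p)) *
        (∏ i : Fin (p - k - 1 + 1), ∏ j ∈ Finset.Ioi i,
            (Matrix.vecCons y w i ^ 2 - Matrix.vecCons y w j ^ 2)) *
        (∏ i : Fin k, ∏ j : Fin (p - k - 1 + 1), (a i ^ 2 - Matrix.vecCons y w j ^ 2)) *
        Set.indicator {v : Fin (p - k - 1 + 1) → ℝ |
            Antitone v ∧ 0 ≤ v (Fin.last (p - k - 1)) ∧ ∀ i : Fin k, v 0 ≤ a i}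
          (fun _ => (1 : ℝ)) (Matrix.vecCons y w)) :
    Measure.map (fun ω =>
      (∫ y in {y : ℝ | d ω ⟨k, by omega⟩ < y ∧ ∀ j : Fin p, (j : ℕ) < k → y < d ω j},
        g (fun i : Fin k => d ω (Fin.castLE (by omega) i)) y) /
      (∫ y in {y : ℝ | 0 < y ∧ ∀ j : Fin p, (j : ℕ) < k → y < d ω j},
        g (fun i : Fin k => d ω (Fin.castLE (by omega) i)) y)) P
      = volume.restrict (Set.Ioo (0 : ℝ) 1) := by

  have hex : ∃ v : NNReal, (v : ℝ) = σ ^ 2 ∧ Measure.map Y P =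
      Measure.pi (fun i : Fin N => Measure.pi (fun j : Fin p => gaussianReal (B i j) v)) :=
    ⟨⟨σ ^ 2, sq_nonneg σ⟩, rfl, hlaw⟩
  clear hlaw
  obtain ⟨v, hv', hlaw⟩ := hex
  have hv0 : v ≠ 0 := by
    intro h
    rw [h, NNReal.coe_zero] at hv'
    have : 0 < σ ^ 2 := by positivity
    linarith
  have hB := Icsv.B_zero N p hNp v hv0 B k hk P Y U V d hYm hlaw hSVD hUorth hVorth hanti hnonneg hnull
  simp only [hB] at hlaw
  clear hnull
  clear hp
  generalize hq : p - k - 1 = q at hg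
  generalize hM : N - p = M at hg
  obtain rfl : p = k + (q + 1) := by omega
  obtain rfl : N = M + (k + (q + 1)) := by omega
  obtain ⟨c, hc, hd⟩ := Icsv.law_d M (k + (q + 1)) (by omega) σ hσ v hv' P Y U V d hYm hdm hlaw hSVD hUorth
    hVorth hanti hnonneg
  have : IsProbabilityMeasure (Measure.map d P) := Measure.isProbabilityMeasure_map hdm.aemeasurable
  have hcore := Icsv.core σ hσ M k q c hc (Measure.map d P) hd
  have hgg : g = Icsv.gg σ M k q := by
    funext a y
    rw [hg]
    unfold Icsv.gg Icsv.Ig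
    rfl
  rw [hgg]
  rw [Measure.map_map ?_ hdm] at hcore
  · rw [← hcore]
    congr 1
    funext ω
    exact Icsv.stat_eq σ M k q (d ω)
  · have : Measurable fun x : Fin (k + (q + 1)) → ℝ =>
        ((fun i => x (Fin.castAdd (q + 1) i) : Fin k → ℝ), x (Fin.natAdd k 0)) := by fun_prop
    exact (Icsv.HH_meas σ M k q).comp this
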